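/- arXiv:1508.02014 — 2 statements merged into one kernel-verified Lean document; each statement's English description precedes it below -/
import Mathlib

section
/- Let n ≥ 2, let q : ℝ^n_+ → ℝ satisfy the cost-function conditions, and let c ∈ ℝ^n_+. Then the profit operator Π_q is injective on L^2_{I−c}(ℝ^n_+) (i.e., if f ∈ L^2_{I−c}(ℝ^n_+) and (Π_q f)(p_0,p) = 0 for all p_0 > 0 and all p ∈ ℝ^n_+, then f = 0 a.e.) if and only if the set { ξ ∈ ℝ^n : (M e^{−q})(c + iξ) = 0 } has Lebesgue measure zero in ℝ^n. -/
open MeasureTheory Complex Set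

noncomputable section

/-- The positive orthant `ℝ^n_+`. -/
def posOrth (n : ℕ) : Set (Fin n → ℝ) := {x | ∀ i, 0 < x i}

/-- `q` satisfies the cost-function conditions: `C¹` on `ℝ^n_+`, positive,
positively homogeneous of degree one, with bounded level sets. -/
def IsCostFun (n : ℕ) (q : (Fin n → ℝ) → ℝ) : Prop :=
  ContDiffOn ℝ 1 q (posOrth n) ∧
  (∀ x ∈ posOrth n, 0 < q x) ∧
  (∀ lam : ℝ, 0 < lam → ∀ x ∈ posOrth n, q (fun i => lam * x i) = lam * q x) ∧
  (∀ t : ℝ, Bornology.IsBounded {x | x ∈ posOrth n ∧ q x = t})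

/-- The `n`-dimensional Mellin transform `(Mg)(z) = ∫_{ℝ^n_+} x^{z-I} g(x) dx`. -/
def mellinT (n : ℕ) (g : (Fin n → ℝ) → ℝ) (z : Fin n → ℂ) : ℂ :=
  ∫ x in posOrth n, (∏ i, (x i : ℂ) ^ (z i - 1)) * g x

/-- Membership in `L²_c(ℝ^n_+)`: measurable with `∫ |f|² x^{2c-I} < ∞`. -/
def MemL2w (n : ℕ) (c : Fin n → ℝ) (f : (Fin n → ℝ) → ℝ) : Prop :=
  AEStronglyMeasurable f (volume.restrict (posOrth n)) ∧
  IntegrableOn (fun x => |f x| ^ 2 * ∏ i, x i ^ (2 * c i - 1)) (posOrth n)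

/-- The profit operator `(Π_q f)(p₀, p)`. -/
def Piq (n : ℕ) (q : (Fin n → ℝ) → ℝ) (f : (Fin n → ℝ) → ℝ)
    (p0 : ℝ) (p : Fin n → ℝ) : ℝ :=
  ∫ x in posOrth n, max 0 (p0 - q (fun i => p i * x i)) * f x

section Four
open FourierTransform SchwartzMap
variable {V : Type*} [NormedAddCommGroup V] [InnerProductSpace ℝ V] [FiniteDimensional ℝ V]
  [MeasurableSpace V] [BorelSpace V]

lemma aux_flip {f g : V → ℂ} (hf : Integrable f) (hg : Integrable g) :
    ∫ x, 𝓕 f x * g x = ∫ x, f x * 𝓕 g x := by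
  have := VectorFourier.integral_fourierIntegral_smul_eq_flip (L := innerₗ V) (μ := volume)
    (ν := volume) (f := f) (g := g) Real.continuous_fourierChar
    (by simpa using! continuous_inner) hf hg
  simp only [smul_eq_mul, flip_innerₗ] at this
  exact this

lemma aux_test {K : V → ℂ} (hK : LocallyIntegrable K)
    (h : ∀ φ : 𝓢(V, ℂ), ∫ x, φ x * K x = 0) : ∀ᵐ x, K x = 0 := by
  apply ae_eq_zero_of_integral_contDiff_smul_eq_zero hK
  intro g hg hgc
  have hc : HasCompactSupport (fun x => (g x : ℂ)) := hgc.comp_left (g := fun r : ℝ => (r : ℂ)) (by simp)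
  have hs : ContDiff ℝ (⊤ : ℕ∞) (fun x => (g x : ℂ)) := Complex.ofRealCLM.contDiff.comp hg
  have := h (hc.toSchwartzMap hs)
  simpa using this

lemma aux_inj {K : V → ℂ} (hK : Integrable K) (h : ∀ v, 𝓕 K v = 0) : ∀ᵐ x, K x = 0 := by
  apply aux_test hK.locallyIntegrable
  intro φ
  have h1 : φ = 𝓕 (𝓕⁻ φ) := (FourierTransform.fourier_fourierInv_eq φ).symm
  rw [h1, SchwartzMap.fourier_coe, aux_flip (SchwartzMap.integrable _) hK]
  simp [h]

lemma aux_L1L2 {H : V → ℂ} (h1 : Integrable H) (h2 : MemLp H 2 volume) :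
    (𝓕 (h2.toLp H) : Lp ℂ 2 (volume : Measure V)) =ᵐ[volume] 𝓕 H := by
  have hc : Continuous (𝓕 H) := VectorFourier.fourierIntegral_continuous
    Real.continuous_fourierChar (by simpa using! continuous_inner) h1
  have hL : LocallyIntegrable (fun x => (𝓕 (h2.toLp H) : Lp ℂ 2 (volume : Measure V)) x) :=
    (Lp.memLp _).locallyIntegrable (by norm_num)
  have : ∀ᵐ x, (𝓕 (h2.toLp H) : Lp ℂ 2 (volume : Measure V)) x - 𝓕 H x = 0 := by
    apply aux_test (hL.sub hc.locallyIntegrable)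
    intro φ
    have e1 := congrArg (fun T => T φ) (Lp.fourier_toTemperedDistribution_eq (h2.toLp H))
    simp only [TemperedDistribution.fourier_apply, Lp.toTemperedDistribution_apply,
      smul_eq_mul] at e1
    have e2 : ∫ x, (𝓕 φ) x * (h2.toLp H) x = ∫ x, (𝓕 φ) x * H x := by
      apply integral_congr_ae
      filter_upwards [h2.coeFn_toLp] with x hx
      rw [hx]
    rw [e2, SchwartzMap.fourier_coe, aux_flip (SchwartzMap.integrable _) h1] at e1
    simp only [Pi.sub_apply, mul_sub]
    rw [integral_sub, e1, sub_self]
    · exact ((φ.memLp 2 volume).integrable_mul (Lp.memLp _))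
    · refine (SchwartzMap.integrable φ).mul_bdd (c := ∫ x, ‖H x‖) hc.aestronglyMeasurable ?_
      exact Filter.Eventually.of_forall fun x => VectorFourier.norm_fourierIntegral_le_integral_norm _ _ _ _ _
  filter_upwards [this] with x hx
  exact sub_eq_zero.1 hx

lemma aux_shift (H : V → ℂ) (v ξ : V) :
    𝓕 (fun u => H (u + v)) ξ = Real.fourierChar (inner ℝ v ξ) • 𝓕 H ξ := by
  have := congrFun (VectorFourier.fourierIntegral_comp_add_right Real.fourierChar volume (innerₗ V) H v) ξ
  exact this

/-- Core identity -/
lemma aux_core {H : V → ℂ} (h1 : Integrable H) (h2 : MemLp H 2 volume)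
    (g : Lp ℂ 2 (volume : Measure V)) (v : V) :
    ∫ u, (starRingEnd ℂ) (H (u + v)) * g u =
      𝓕 (fun ξ => (starRingEnd ℂ) (𝓕 H ξ) * (𝓕 g : Lp ℂ 2 (volume : Measure V)) ξ) v := by
  have h1' : Integrable (fun u => H (u + v)) := h1.comp_add_right v
  have h2' : MemLp (fun u => H (u + v)) 2 volume :=
    h2.comp_measurePreserving (measurePreserving_add_right volume v)
  have := Lp.inner_fourier_eq (h2'.toLp _) g
  rw [L2.inner_def, L2.inner_def] at this
  have e1 : ∫ u, (starRingEnd ℂ) (H (u + v)) * g u = ∫ u, inner ℂ ((h2'.toLp _) u) (g u) := by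
    apply integral_congr_ae
    filter_upwards [h2'.coeFn_toLp] with x hx
    rw [hx, RCLike.inner_apply']
  rw [e1, ← this, Real.fourier_eq]
  apply integral_congr_ae
  filter_upwards [aux_L1L2 h1' h2'] with x hx
  rw [hx, RCLike.inner_apply', aux_shift, Circle.smul_def, Circle.smul_def, smul_eq_mul, smul_eq_mul,
    map_mul, AddChar.map_neg_eq_inv, Circle.coe_inv_eq_conj, real_inner_comm, mul_assoc]

lemma aux_int {H : V → ℂ} (h1 : Integrable H) (h2 : MemLp H 2 volume)
    (g : Lp ℂ 2 (volume : Measure V)) :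
    Integrable (fun ξ => (starRingEnd ℂ) (𝓕 H ξ) * (𝓕 g : Lp ℂ 2 (volume : Measure V)) ξ) := by
  have h3 : MemLp (𝓕 H) 2 volume := (memLp_congr_ae (aux_L1L2 h1 h2)).1 (Lp.memLp _)
  exact h3.star.integrable_mul (Lp.memLp _)

lemma aux_iff {H : V → ℂ} (h1 : Integrable H) (h2 : MemLp H 2 volume)
    (g : Lp ℂ 2 (volume : Measure V)) :
    (∀ v, ∫ u, (starRingEnd ℂ) (H (u + v)) * g u = 0) ↔
      ∀ᵐ ξ, 𝓕 H ξ = 0 ∨ (𝓕 g : Lp ℂ 2 (volume : Measure V)) ξ = 0 := by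
  constructor
  · intro h
    filter_upwards [aux_inj (aux_int h1 h2 g) (fun v => by rw [← aux_core h1 h2, h])] with x hx
    simpa using hx
  · intro h v
    rw [aux_core h1 h2, Real.fourier_eq]
    apply integral_eq_zero_of_ae
    filter_upwards [h] with x hx
    rcases hx with hx | hx <;> simp [hx]

theorem core_thm {H : V → ℝ} (h1 : Integrable H) (h2 : MemLp H 2 volume) :
    (∀ g : V → ℝ, MemLp g 2 volume → (∀ v, ∫ u, H (u + v) * g u = 0) → ∀ᵐ u, g u = 0) ↔
      volume {ξ : V | 𝓕 (fun u => (H u : ℂ)) ξ = 0} = 0 := by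
  have h1' : Integrable (fun u => (H u : ℂ)) := h1.ofReal
  have h2' : MemLp (fun u => (H u : ℂ)) 2 volume := h2.ofReal
  have hc : Continuous (𝓕 (fun u => (H u : ℂ))) := VectorFourier.fourierIntegral_continuous
    Real.continuous_fourierChar (by simpa using! continuous_inner) h1'
  constructor
  · intro hinj
    by_contra hne
    have hm : MeasurableSet {ξ : V | 𝓕 (fun u => (H u : ℂ)) ξ = 0} :=
      (isClosed_singleton.preimage hc).measurableSet
    obtain ⟨t, ht, hts, ht0, htf⟩ := Measure.exists_subset_measure_lt_top hm (pos_iff_ne_zero.2 hne)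
    let G : Lp ℂ 2 (volume : Measure V) := indicatorConstLp 2 ht htf.ne 1
    let g : Lp ℂ 2 (volume : Measure V) := 𝓕⁻ G
    have hg : 𝓕 g = G := FourierTransform.fourier_fourierInv_eq G
    have hz := (aux_iff h1' h2' g).2 (by
      rw [hg]
      filter_upwards [indicatorConstLp_coeFn (p := 2) (hs := ht) (hμs := htf.ne) (c := (1:ℂ))] with x hx
      by_cases hxt : x ∈ t
      · exact Or.inl (hts hxt)
      · right; rw [hx]; simp [hxt])
    have hgL : MemLp g 2 volume := Lp.memLp g
    have hint : ∀ v, Integrable (fun u => (H (u + v) : ℂ) * g u) := fun v =>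
      (h2'.comp_measurePreserving (measurePreserving_add_right volume v)).integrable_mul hgL
    simp only [conj_ofReal] at hz
    have r := hinj (fun u => (g u).re) hgL.re (fun v => by
      have := congrArg Complex.re (hz v)
      rw [← RCLike.re_eq_complex_re, ← integral_re (hint v)] at this
      simpa using this)
    have i := hinj (fun u => (g u).im) hgL.im (fun v => by
      have := congrArg Complex.im (hz v)
      rw [← RCLike.im_eq_complex_im, ← integral_im (hint v)] at this
      simpa using this)
    have g0 : g = 0 := by
      rw [Lp.eq_zero_iff_ae_eq_zero]
      filter_upwards [r, i] with x hr hi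
      exact Complex.ext hr hi
    have G0 : G = 0 := by
      rw [← hg, g0]; exact map_zero (Lp.fourierTransformₗᵢ V ℂ)
    have : ‖G‖ = 0 := by rw [G0, norm_zero]
    rw [norm_indicatorConstLp (by norm_num) (by norm_num)] at this
    simp [Measure.real, ENNReal.toReal_eq_zero_iff] at this
    rcases this with h | h
    · exact ht0.ne' h
    · exact htf.ne h
  · intro hz g hg hgz
    have hg' : MemLp (fun u => (g u : ℂ)) 2 volume := hg.ofReal
    have hiff := (aux_iff h1' h2' (hg'.toLp _)).1 (fun v => by
      have : ∫ u, ((H (u + v) * g u : ℝ) : ℂ) = 0 := by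
        rw [integral_complex_ofReal, hgz v]; simp
      rw [← this]
      apply integral_congr_ae
      filter_upwards [hg'.coeFn_toLp] with x hx
      rw [hx]; simp)
    have F0 : 𝓕 (hg'.toLp _) = 0 := by
      rw [Lp.eq_zero_iff_ae_eq_zero]
      have hz' : ∀ᵐ ξ, ¬ (𝓕 (fun u => (H u : ℂ)) ξ = 0) := by
        rw [ae_iff]; simpa using hz
      filter_upwards [hiff, hz'] with x a b
      exact a.resolve_left b
    have : hg'.toLp _ = 0 := (Lp.fourierTransformₗᵢ V ℂ).map_eq_zero_iff.1 F0
    rw [Lp.eq_zero_iff_ae_eq_zero] at this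
    filter_upwards [this, hg'.coeFn_toLp] with x a b
    rw [b] at a
    simpa using a

end Four

/-- exponential coordinates on the plain product -/
def expP (n : ℕ) (u : Fin n → ℝ) : Fin n → ℝ := fun i => Real.exp (u i)

/-- exponential coordinates on Euclidean space -/
def expE (n : ℕ) (u : EuclideanSpace ℝ (Fin n)) : Fin n → ℝ := fun i => Real.exp (u i)

lemma expP_cont (n : ℕ) : Continuous (expP n) := by unfold expP; fun_prop

lemma expE_cont (n : ℕ) : Continuous (expE n) := by unfold expE; fun_prop

lemma expE_mem (n : ℕ) (u) : expE n u ∈ posOrth n := fun _ => Real.exp_pos _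

lemma expP_inj (n : ℕ) : Function.Injective (expP n) := fun u v h => by
  funext i
  exact Real.exp_injective (congrFun h i)

lemma expP_range (n : ℕ) : range (expP n) = posOrth n := by
  ext x
  constructor
  · rintro ⟨u, rfl⟩ i
    exact Real.exp_pos _
  · intro h
    exact ⟨fun i => Real.log (x i), funext fun i => Real.exp_log (h i)⟩

lemma expP_emb (n : ℕ) : MeasurableEmbedding (expP n) :=
  (expP_cont n).measurableEmbedding (expP_inj n)

lemma densP_meas (n : ℕ) : Measurable (fun u : Fin n → ℝ => ENNReal.ofReal (Real.exp (∑ i, u i))) := by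
  fun_prop

lemma expP_mp (n : ℕ) : MeasurePreserving (expP n)
    ((volume : Measure (Fin n → ℝ)).withDensity (fun u => ENNReal.ofReal (Real.exp (∑ i, u i))))
    (volume.restrict (posOrth n)) := by
  refine ⟨(expP_cont n).measurable, ?_⟩
  have := map_withDensity_abs_det_fderiv_eq_addHaar (s := univ) (f := expP n)
    (volume : Measure (Fin n → ℝ))
    (f' := fun u => ContinuousLinearMap.pi (fun i =>
      (Real.exp (u i) • ContinuousLinearMap.id ℝ ℝ).comp (ContinuousLinearMap.proj i)))
    MeasurableSet.univ.nullMeasurableSet ?_ (expP_inj n).injOn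
  · rw [Measure.restrict_univ, image_univ, expP_range] at this
    rw [← this]
    congr 2
    funext u
    rw [ContinuousLinearMap.det_pi]
    congr 1
    rw [Real.exp_sum, Finset.abs_prod]
    refine Finset.prod_congr rfl fun i _ => ?_
    simp [ContinuousLinearMap.det]
  · intro u _
    apply HasFDerivAt.hasFDerivWithinAt
    rw [hasFDerivAt_pi']
    intro i
    have h1 : HasFDerivAt (fun u : Fin n → ℝ => u i) (ContinuousLinearMap.proj (R := ℝ) i) u :=
      hasFDerivAt_apply i u
    have := h1.exp
    convert! this using 1

section T
variable {n : ℕ}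

lemma T_int {F : Type*} [NormedAddCommGroup F] [NormedSpace ℝ F] (f : (Fin n → ℝ) → F) :
    ∫ x in posOrth n, f x =
      ∫ u : EuclideanSpace ℝ (Fin n), Real.exp (∑ i, u i) • f (expE n u) := by
  rw [← (expP_mp n).integral_comp (expP_emb n), integral_withDensity_eq_integral_toReal_smul
    (densP_meas n) (by simp), ← (PiLp.volume_preserving_ofLp (Fin n)).integral_comp
    (MeasurableEquiv.toLp 2 (Fin n → ℝ)).symm.measurableEmbedding]
  congr 1
  funext u
  rw [ENNReal.toReal_ofReal (Real.exp_pos _).le]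
  rfl

lemma T_integrable {F : Type*} [NormedAddCommGroup F] [NormedSpace ℝ F] (f : (Fin n → ℝ) → F) :
    IntegrableOn f (posOrth n) ↔
      Integrable (fun u : EuclideanSpace ℝ (Fin n) => Real.exp (∑ i, u i) • f (expE n u)) := by
  rw [IntegrableOn, ← (expP_mp n).integrable_comp_emb (expP_emb n),
    integrable_withDensity_iff_integrable_smul' (densP_meas n) (by simp),
    ← (PiLp.volume_preserving_ofLp (Fin n)).integrable_comp_emb
    (MeasurableEquiv.toLp 2 (Fin n → ℝ)).symm.measurableEmbedding]
  apply integrable_congr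
  filter_upwards with u
  simp only [Function.comp]
  rw [ENNReal.toReal_ofReal (Real.exp_pos _).le]
  rfl

lemma T_ae (p : (Fin n → ℝ) → Prop) :
    (∀ᵐ x ∂(volume.restrict (posOrth n)), p x) ↔
      ∀ᵐ u : EuclideanSpace ℝ (Fin n), p (expE n u) := by
  have he : MeasurableEmbedding (@WithLp.ofLp 2 (Fin n → ℝ)) :=
    (MeasurableEquiv.toLp 2 (Fin n → ℝ)).symm.measurableEmbedding
  rw [← (expP_mp n).map_eq, (expP_emb n).ae_map_iff, ae_withDensity_iff (densP_meas n),
    ← (PiLp.volume_preserving_ofLp (Fin n)).map_eq, he.ae_map_iff]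
  have : ∀ u : Fin n → ℝ, ENNReal.ofReal (Real.exp (∑ i, u i)) ≠ 0 := fun u => by
    simpa using Real.exp_pos _
  simp only [this, ne_eq, not_false_eq_true, true_imp_iff]
  rfl

lemma T_meas (f : (Fin n → ℝ) → ℝ) :
    AEStronglyMeasurable f (volume.restrict (posOrth n)) ↔
      AEStronglyMeasurable (fun u : EuclideanSpace ℝ (Fin n) => f (expE n u)) volume := by
  rw [← (expP_mp n).aestronglyMeasurable_comp_iff (expP_emb n)]
  have h1 : AEStronglyMeasurable (f ∘ expP n) ((volume : Measure (Fin n → ℝ)).withDensity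
      (fun u => ENNReal.ofReal (Real.exp (∑ i, u i)))) ↔
      AEStronglyMeasurable (f ∘ expP n) volume :=
    ⟨fun h => h.mono_ac (withDensity_absolutelyContinuous' (densP_meas n).aemeasurable
      (by filter_upwards with u; simpa using Real.exp_pos _)),
    fun h => h.mono_ac (withDensity_absolutelyContinuous _ _)⟩
  rw [h1, ← (PiLp.volume_preserving_ofLp (Fin n)).aestronglyMeasurable_comp_iff
    (MeasurableEquiv.toLp 2 (Fin n → ℝ)).symm.measurableEmbedding]
  rfl
end T

section Q
variable {n : ℕ}

/-- constant vector -/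
def cv (n : ℕ) (s : ℝ) : EuclideanSpace ℝ (Fin n) := WithLp.toLp 2 (fun _ => s)

@[simp] lemma cv_apply (s : ℝ) (i : Fin n) : cv n s i = s := rfl

/-- the kernel -/
def kerH (c : Fin n → ℝ) (Q : EuclideanSpace ℝ (Fin n) → ℝ) (u : EuclideanSpace ℝ (Fin n)) : ℝ :=
  Real.exp (∑ i, c i * u i) * max 0 (1 - Q u)

variable {c : Fin n → ℝ} {Q : EuclideanSpace ℝ (Fin n) → ℝ}

lemma kerH_cont (hQc : Continuous Q) : Continuous (kerH c Q) := by
  unfold kerH; fun_prop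

lemma kerH_nonneg (u) : 0 ≤ kerH c Q u := mul_nonneg (Real.exp_pos _).le (le_max_left _ _)

lemma kerH_le (hQp : ∀ u, 0 < Q u) {L : ℝ} (hL : ∀ u, Q u ≤ 1 → ∀ i, u i ≤ L) (u) :
    kerH c Q u ≤ ∏ i, (Iic L).indicator (fun t => Real.exp (c i * t)) (u i) := by
  by_cases h : Q u ≤ 1
  · have : ∀ i, (Iic L).indicator (fun t => Real.exp (c i * t)) (u i) = Real.exp (c i * u i) :=
      fun i => indicator_of_mem (mem_Iic.2 (hL u h i)) _
    simp only [this]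
    rw [← Real.exp_sum, kerH]
    have : max 0 (1 - Q u) ≤ 1 := max_le zero_le_one (by linarith [hQp u])
    exact mul_le_of_le_one_right (Real.exp_pos _).le this
  · have : kerH c Q u = 0 := by
      rw [kerH, max_eq_left (by linarith), mul_zero]
    rw [this]
    exact Finset.prod_nonneg fun i _ => indicator_nonneg (fun _ _ => (Real.exp_pos _).le) _

lemma kerH_integrable (hc : ∀ i, 0 < c i) (hQc : Continuous Q) (hQp : ∀ u, 0 < Q u) {L : ℝ}
    (hL : ∀ u, Q u ≤ 1 → ∀ i, u i ≤ L) : Integrable (kerH c Q) := by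
  have h1 : Integrable (fun x : Fin n → ℝ =>
      ∏ i, (Iic L).indicator (fun t => Real.exp (c i * t)) (x i)) :=
    Integrable.fintype_prod (f := fun i => (Iic L).indicator (fun t => Real.exp (c i * t)))
      (fun i => (integrable_indicator_iff measurableSet_Iic).2 (integrableOn_exp_mul_Iic (hc i) L))
  have h2 := (PiLp.volume_preserving_ofLp (Fin n)).integrable_comp_of_integrable h1
  refine h2.mono' (kerH_cont hQc).aestronglyMeasurable ?_
  filter_upwards with u
  rw [Real.norm_of_nonneg (kerH_nonneg u)]
  exact kerH_le hQp hL u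

lemma kerH_memLp (hc : ∀ i, 0 < c i) (hQc : Continuous Q) (hQp : ∀ u, 0 < Q u) {L : ℝ}
    (hL : ∀ u, Q u ≤ 1 → ∀ i, u i ≤ L) : MemLp (kerH c Q) 2 volume := by
  have hi := kerH_integrable hc hQc hQp hL
  rw [memLp_two_iff_integrable_sq hi.aestronglyMeasurable]
  simp only [sq]
  refine hi.mul_bdd (c := ∏ i, Real.exp (c i * L)) hi.aestronglyMeasurable ?_
  filter_upwards with u
  rw [Real.norm_of_nonneg (kerH_nonneg u)]
  refine (kerH_le hQp hL u).trans (Finset.prod_le_prod (fun i _ =>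
    indicator_nonneg (fun _ _ => (Real.exp_pos _).le) _) fun i _ => ?_)
  refine indicator_le' (f := fun t => Real.exp (c i * t)) (g := fun _ => Real.exp (c i * L)) ?_ ?_ _
  · intro t ht
    exact Real.exp_le_exp.2 (mul_le_mul_of_nonneg_left ht (hc i).le)
  · intro t _; exact (Real.exp_pos _).le

lemma max_int (a : ℝ) (ha : 0 < a) :
    ∫ t in Ioi (0:ℝ), max 0 (t - a) * Real.exp (-t) = Real.exp (-a) := by
  have h1 : ∫ t in Ioi (0:ℝ), max 0 (t - a) * Real.exp (-t)
      = ∫ t in Ioi a, max 0 (t - a) * Real.exp (-t) := by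
    refine setIntegral_eq_of_subset_of_forall_sdiff_eq_zero measurableSet_Ioi
      (Ioi_subset_Ioi ha.le) ?_
    intro t ht
    have : t ≤ a := not_lt.1 ht.2
    rw [max_eq_left (by linarith), zero_mul]
  have h2 : ∫ t in Ioi a, max 0 (t - a) * Real.exp (-t)
      = ∫ s in Ioi (0:ℝ), Real.exp (-a) * (Real.exp (-s) * s ^ ((2:ℝ) - 1)) := by
    have e := (measurePreserving_add_right (volume : Measure ℝ) a).setIntegral_preimage_emb
      (MeasurableEquiv.addRight a).measurableEmbedding
      (fun t => max 0 (t - a) * Real.exp (-t)) (Ioi a)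
    rw [← e]
    have : (fun x => x + a) ⁻¹' Ioi a = Ioi 0 := by ext; simp
    rw [this]
    refine setIntegral_congr_fun measurableSet_Ioi fun s hs => ?_
    have hs' : 0 < s := hs
    have : (2:ℝ) - 1 = 1 := by norm_num
    simp only [add_sub_cancel_right, max_eq_right hs'.le, this, Real.rpow_one]
    rw [neg_add, Real.exp_add]; ring
  rw [h1, h2, integral_const_mul, ← Real.Gamma_eq_integral (by norm_num), Real.Gamma_two, mul_one]

lemma exp_shift (z : Fin n → ℂ) (u : EuclideanSpace ℝ (Fin n)) {t : ℝ} (ht : 0 < t) :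
    cexp (∑ i, z i * ((u + cv n (Real.log t)) i : ℝ)) =
      (t : ℂ) ^ (∑ i, z i) * cexp (∑ i, z i * (u i : ℝ)) := by
  rw [Complex.cpow_def_of_ne_zero (by exact_mod_cast ht.ne'), ← Complex.exp_add,
    ← Complex.ofReal_log ht.le, Finset.mul_sum, ← Finset.sum_add_distrib]
  congr 1
  refine Finset.sum_congr rfl fun i _ => ?_
  simp
  ring

lemma Q_shift (hQh : ∀ u s, Q (u + cv n s) = Real.exp s * Q u) (u) {t : ℝ} (ht : 0 < t) :
    max 0 (t - Q (u + cv n (Real.log t))) = t * max 0 (1 - Q u) := by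
  rw [hQh, Real.exp_log ht, mul_max_of_nonneg _ _ ht.le]
  congr 1 <;> ring

lemma norm_cexp_sum (z : Fin n → ℂ) (u : EuclideanSpace ℝ (Fin n)) :
    ‖cexp (∑ i, z i * (u i : ℝ))‖ = Real.exp (∑ i, (z i).re * u i) := by
  rw [Complex.norm_exp]; simp

/-- the integrand -/
def phi (z : Fin n → ℂ) (Q : EuclideanSpace ℝ (Fin n) → ℝ) (u : EuclideanSpace ℝ (Fin n)) (t : ℝ) : ℂ :=
  cexp (∑ i, z i * (u i : ℝ)) * ((max 0 (t - Q u) * Real.exp (-t) : ℝ) : ℂ)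

lemma phi_shift (z : Fin n → ℂ) (hQh : ∀ u s, Q (u + cv n s) = Real.exp s * Q u) (u) {t : ℝ}
    (ht : 0 < t) : phi z Q (u + cv n (Real.log t)) t =
      (((-t).exp : ℝ) * (t : ℂ) ^ ((∑ i, z i) + 2 - 1)) *
        (cexp (∑ i, z i * (u i : ℝ)) * ((max 0 (1 - Q u) : ℝ) : ℂ)) := by
  have h0 : (t : ℂ) ≠ 0 := by exact_mod_cast ht.ne'
  have : (t : ℂ) ^ ((∑ i, z i) + 2 - 1) = (t : ℂ) ^ (∑ i, z i) * t := by
    rw [add_sub_assoc, show (2:ℂ) - 1 = 1 by norm_num, Complex.cpow_add _ _ h0, Complex.cpow_one]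
  rw [phi, exp_shift z u ht, Q_shift hQh u ht, this]
  push_cast
  ring

lemma norm_base (z : Fin n → ℂ) (u) :
    ‖cexp (∑ i, z i * (u i : ℝ)) * ((max 0 (1 - Q u) : ℝ) : ℂ)‖ =
      kerH (fun i => (z i).re) Q u := by
  rw [norm_mul, norm_cexp_sum, Complex.norm_real, Real.norm_of_nonneg (le_max_left _ _), kerH]

lemma gamma_id (z : Fin n → ℂ) (hz : ∀ i, 0 < (z i).re) (hQc : Continuous Q) (hQp : ∀ u, 0 < Q u)
    {L : ℝ} (hL : ∀ u, Q u ≤ 1 → ∀ i, u i ≤ L)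
    (hQh : ∀ u s, Q (u + cv n s) = Real.exp s * Q u) :
    ∫ u, cexp (∑ i, z i * (u i : ℝ)) * ((Real.exp (-Q u) : ℝ) : ℂ) =
      Complex.Gamma ((∑ i, z i) + 2) *
        ∫ u, cexp (∑ i, z i * (u i : ℝ)) * ((max 0 (1 - Q u) : ℝ) : ℂ) := by
  have hre : 0 < ((∑ i, z i) + 2).re := by
    simp only [add_re, re_sum, re_ofNat]
    have := Finset.sum_nonneg (s := Finset.univ) fun i _ => (hz i).le
    linarith
  have hbint : Integrable (fun u => cexp (∑ i, z i * (u i : ℝ)) * ((max 0 (1 - Q u) : ℝ) : ℂ)) := by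
    have := kerH_integrable (c := fun i => (z i).re) hz hQc hQp hL
    refine this.mono' (Continuous.aestronglyMeasurable (by fun_prop)) ?_
    filter_upwards with u
    rw [norm_base]
  have hsec : ∀ t : ℝ, 0 < t → Integrable (fun u => phi z Q u t) := by
    intro t ht
    have h : Integrable (fun u => phi z Q (u + cv n (Real.log t)) t) := by
      simp only [phi_shift z hQh _ ht]
      exact hbint.const_mul _
    have h' := h.comp_add_right (-cv n (Real.log t))
    simpa using h'
  have hG := Complex.GammaIntegral_convergent hre
  have hfub : Integrable (Function.uncurry (phi z Q))
      (volume.prod (volume.restrict (Ioi (0:ℝ)))) := by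
    rw [integrable_prod_iff' (Continuous.aestronglyMeasurable (by unfold phi; fun_prop))]
    constructor
    · filter_upwards [ae_restrict_mem measurableSet_Ioi] with t ht
      exact hsec t ht
    · have h1 := hG.norm.mul_const
        (∫ u, ‖cexp (∑ i, z i * (u i : ℝ)) * ((max 0 (1 - Q u) : ℝ) : ℂ)‖)
      refine h1.congr ?_
      filter_upwards [ae_restrict_mem measurableSet_Ioi] with t ht
      rw [← integral_const_mul, ← integral_add_right_eq_self
        (fun u => ‖Function.uncurry (phi z Q) (u, t)‖) (cv n (Real.log t))]
      congr 1
      funext u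
      simp only [Function.uncurry]
      rw [phi_shift z hQh u ht, norm_mul _ (_ * _)]
  have hsw := integral_integral_swap hfub
  have hl : ∀ u, ∫ t in Ioi (0:ℝ), phi z Q u t =
      cexp (∑ i, z i * (u i : ℝ)) * ((Real.exp (-Q u) : ℝ) : ℂ) := by
    intro u
    simp only [phi]
    rw [integral_const_mul, integral_complex_ofReal, max_int _ (hQp u)]
  simp only [hl] at hsw
  rw [hsw, Complex.Gamma_eq_integral hre, Complex.GammaIntegral, ← integral_mul_const]
  refine setIntegral_congr_fun measurableSet_Ioi fun t ht => ?_
  simp only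
  rw [← integral_const_mul, ← integral_add_right_eq_self (fun u => phi z Q u t) (cv n (Real.log t))]
  congr 1
  funext u
  exact phi_shift z hQh u ht
end Q

section Fin4
open FourierTransform
variable {n : ℕ} {q : (Fin n → ℝ) → ℝ} {c : Fin n → ℝ}

lemma Q_cont (hq : IsCostFun n q) : Continuous (fun u => q (expE n u)) := by
  have := hq.1.continuousOn.comp_continuous (expE_cont n) (expE_mem n)
  exact this

lemma Q_hom (hq : IsCostFun n q) (u) (s : ℝ) :
    q (expE n (u + cv n s)) = Real.exp s * q (expE n u) := by
  rw [← hq.2.2.1 _ (Real.exp_pos s) _ (expE_mem n u)]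
  congr 1
  funext i
  simp only [expE, PiLp.add_apply, cv_apply]
  rw [Real.exp_add, mul_comm]

lemma Q_bdd (hq : IsCostFun n q) :
    ∃ L : ℝ, ∀ u, q (expE n u) ≤ 1 → ∀ i, u i ≤ L := by
  obtain ⟨R, hR⟩ := (hq.2.2.2 1).exists_norm_le
  refine ⟨Real.log (max R 1), fun u hu i => ?_⟩
  have hR1 : 0 < max R 1 := lt_max_of_lt_right one_pos
  rw [Real.le_log_iff_exp_le hR1]
  have hp := hq.2.1 _ (expE_mem n u)
  have hmem : (fun i => (q (expE n u))⁻¹ * expE n u i) ∈ {x | x ∈ posOrth n ∧ q x = 1} := by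
    refine ⟨fun i => mul_pos (inv_pos.2 hp) (expE_mem n u i), ?_⟩
    rw [hq.2.2.1 _ (inv_pos.2 hp) _ (expE_mem n u), inv_mul_cancel₀ hp.ne']
  have h1 := (norm_le_pi_norm _ i).trans (hR _ hmem)
  rw [Real.norm_of_nonneg (mul_pos (inv_pos.2 hp) (expE_mem n u i)).le] at h1
  have h2 : Real.exp (u i) ≤ q (expE n u) * R := by
    rw [inv_mul_le_iff₀ hp] at h1
    exact h1
  have hR0 : 0 ≤ R := by
    by_contra hneg
    have := Real.exp_pos (u i)
    nlinarith
  calc Real.exp (u i) ≤ q (expE n u) * R := h2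
    _ ≤ 1 * R := mul_le_mul_of_nonneg_right hu hR0
    _ ≤ max R 1 := by rw [one_mul]; exact le_max_left _ _

lemma prod_exp_cpow (z : Fin n → ℂ) (u : EuclideanSpace ℝ (Fin n)) :
    (Real.exp (∑ i, u i) : ℂ) * ∏ i, ((expE n u i : ℝ) : ℂ) ^ (z i - 1) =
      cexp (∑ i, z i * (u i : ℝ)) := by
  have : ∀ i, ((expE n u i : ℝ) : ℂ) ^ (z i - 1) = cexp ((z i - 1) * (u i : ℝ)) := by
    intro i
    have h0 : ((expE n u i : ℝ) : ℂ) ≠ 0 := by exact_mod_cast (expE_mem n u i).ne'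
    rw [Complex.cpow_def_of_ne_zero h0, ← Complex.ofReal_log (expE_mem n u i).le, expE,
      Real.log_exp, mul_comm]
  simp only [this]
  rw [← Complex.exp_sum, Complex.ofReal_exp, ← Complex.exp_add]
  congr 1
  push_cast
  rw [← Finset.sum_add_distrib]
  refine Finset.sum_congr rfl fun i _ => ?_
  ring

lemma mellin_eq (hq : IsCostFun n q) (hc : ∀ i, 0 < c i) (ξ : Fin n → ℝ) :
    mellinT n (fun x => Real.exp (-q x)) (fun i => (c i : ℂ) + I * (ξ i : ℂ)) =
      Complex.Gamma ((∑ i, ((c i : ℂ) + I * (ξ i : ℂ))) + 2) *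
      𝓕 (fun u => (kerH c (fun u => q (expE n u)) u : ℂ))
        ((-(2 * Real.pi)⁻¹ : ℝ) • WithLp.toLp 2 ξ) := by
  obtain ⟨L, hL⟩ := Q_bdd hq
  have hg := gamma_id (Q := fun u => q (expE n u)) (fun i => (c i : ℂ) + I * (ξ i : ℂ))
    (by simpa using hc) (Q_cont hq) (fun u => hq.2.1 _ (expE_mem n u)) hL (Q_hom hq)
  rw [mellinT, T_int]
  have e1 : ∀ u : EuclideanSpace ℝ (Fin n), Real.exp (∑ i, u i) •
      ((∏ i, ((expE n u i : ℝ) : ℂ) ^ ((c i : ℂ) + I * (ξ i : ℂ) - 1)) *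
        ((Real.exp (-q (expE n u)) : ℝ) : ℂ)) =
      cexp (∑ i, ((c i : ℂ) + I * (ξ i : ℂ)) * (u i : ℝ)) *
        ((Real.exp (-q (expE n u)) : ℝ) : ℂ) := by
    intro u
    rw [← prod_exp_cpow, Complex.real_smul, mul_assoc]
  simp only [e1]
  rw [hg, Real.fourier_eq']
  congr 1
  congr 1
  funext u
  rw [kerH, smul_eq_mul, Complex.ofReal_mul (Real.exp _), ← mul_assoc, Complex.ofReal_exp, ← Complex.exp_add]
  congr 2
  have hpi : (Real.pi : ℂ) ≠ 0 := by exact_mod_cast Real.pi_ne_zero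
  simp only [inner_smul_right, PiLp.inner_apply, RCLike.inner_apply, conj_trivial]
  push_cast
  rw [Finset.mul_sum, Finset.mul_sum, Finset.sum_mul, ← Finset.sum_add_distrib]
  refine Finset.sum_congr rfl fun i _ => ?_
  field_simp
  ring

/-- transferred function -/
def gOf (c : Fin n → ℝ) (f : (Fin n → ℝ) → ℝ) (u : EuclideanSpace ℝ (Fin n)) : ℝ :=
  Real.exp (∑ i, (1 - c i) * u i) * f (expE n u)

lemma gOf_ae (f : (Fin n → ℝ) → ℝ) :
    (∀ᵐ x ∂(volume.restrict (posOrth n)), f x = 0) ↔ ∀ᵐ u, gOf c f u = 0 := by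
  rw [T_ae]
  simp [gOf]

lemma gOf_surj (g : EuclideanSpace ℝ (Fin n) → ℝ) : ∃ f, gOf c f = g := by
  refine ⟨fun x => Real.exp (-∑ i, (1 - c i) * Real.log (x i)) *
    g (WithLp.toLp 2 fun i => Real.log (x i)), ?_⟩
  funext u
  simp only [gOf, expE, Real.log_exp]
  rw [← mul_assoc, ← Real.exp_add, add_neg_cancel, Real.exp_zero, one_mul]

lemma gOf_mem (f : (Fin n → ℝ) → ℝ) :
    MemL2w n (fun i => 1 - c i) f ↔ MemLp (gOf c f) 2 volume := by
  have hW : Continuous fun u : EuclideanSpace ℝ (Fin n) => Real.exp (∑ i, (1 - c i) * u i) := by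
    fun_prop
  have hm : AEStronglyMeasurable f (volume.restrict (posOrth n)) ↔
      AEStronglyMeasurable (gOf c f) volume := by
    rw [T_meas]
    constructor
    · intro h
      exact hW.aestronglyMeasurable.mul h
    · intro h
      have h2 := (hW.inv₀ (fun u => (Real.exp_pos _).ne')).aestronglyMeasurable.mul h (μ := volume)
      refine h2.congr ?_
      filter_upwards with u
      simp only [gOf, Pi.mul_apply, Pi.inv_apply]
      rw [inv_mul_cancel_left₀ (Real.exp_pos _).ne']
  have hi : IntegrableOn (fun x => |f x| ^ 2 * ∏ i, x i ^ (2 * (1 - c i) - 1)) (posOrth n) ↔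
      Integrable (fun u => gOf c f u ^ 2) := by
    rw [T_integrable]
    apply integrable_congr
    filter_upwards with u
    have : ∏ i, expE n u i ^ (2 * (1 - c i) - 1) =
        Real.exp (∑ i, (2 * (1 - c i) - 1) * u i) := by
      rw [Real.exp_sum]
      refine Finset.prod_congr rfl fun i _ => ?_
      rw [expE, ← Real.exp_mul, mul_comm]
    simp only [this, gOf, smul_eq_mul, sq_abs, mul_pow]
    rw [← Real.exp_nat_mul, mul_left_comm, ← Real.exp_add, mul_comm]
    congr 2
    rw [Finset.mul_sum, ← Finset.sum_add_distrib]
    refine Finset.sum_congr rfl fun i _ => ?_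
    push_cast
    ring
  rw [MemL2w, hm]
  constructor
  · rintro ⟨a, b⟩
    exact (memLp_two_iff_integrable_sq a).2 (hi.1 b)
  · intro h
    exact ⟨h.aestronglyMeasurable, hi.2 ((memLp_two_iff_integrable_sq h.aestronglyMeasurable).1 h)⟩

lemma Piq_eq (hq : IsCostFun n q) (f : (Fin n → ℝ) → ℝ) (s : ℝ) (v : EuclideanSpace ℝ (Fin n)) :
    Piq n q f (Real.exp s) (expE n v) = Real.exp (s - ∑ i, c i * (v i - s)) *
      ∫ u, kerH c (fun u => q (expE n u)) (u + (v + cv n (-s))) * gOf c f u := by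
  rw [Piq, T_int, ← integral_const_mul]
  congr 1
  funext u
  have h1 : q (fun i => expE n v i * expE n u i) = q (expE n (u + v)) := by
    congr 1
    funext i
    simp only [expE, PiLp.add_apply]
    rw [Real.exp_add, mul_comm]
  rw [h1]
  simp only [kerH]
  rw [← add_assoc, Q_hom hq]
  have h2 : max 0 (Real.exp s - q (expE n (u + v))) =
      Real.exp s * max 0 (1 - Real.exp (-s) * q (expE n (u + v))) := by
    rw [mul_max_of_nonneg _ _ (Real.exp_pos s).le, mul_zero, mul_sub, ← mul_assoc,
      ← Real.exp_add, add_neg_cancel, Real.exp_zero, one_mul, mul_one]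
  rw [h2, gOf, smul_eq_mul]
  generalize max 0 (1 - Real.exp (-s) * q (expE n (u + v))) = m
  generalize f (expE n u) = y
  have h3 : Real.exp (∑ i, u i) * Real.exp s = Real.exp (s - ∑ i, c i * (v i - s)) *
      Real.exp (∑ i, c i * (u + v + cv n (-s)) i) * Real.exp (∑ i, (1 - c i) * u i) := by
    rw [← Real.exp_add, ← Real.exp_add, ← Real.exp_add]
    congr 1
    have : ∑ i, u i + ∑ i, c i * (v i - s) =
        ∑ i, c i * (u + v + cv n (-s)) i + ∑ i, (1 - c i) * u i := by
      rw [← Finset.sum_add_distrib, ← Finset.sum_add_distrib]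
      refine Finset.sum_congr rfl fun i _ => ?_
      simp only [PiLp.add_apply, cv_apply]
      ring
    linarith
  linear_combination (m * y) * h3

lemma Piq_iff (hq : IsCostFun n q) (f : (Fin n → ℝ) → ℝ) :
    (∀ p0 : ℝ, 0 < p0 → ∀ p ∈ posOrth n, Piq n q f p0 p = 0) ↔
      ∀ v, ∫ u, kerH c (fun u => q (expE n u)) (u + v) * gOf c f u = 0 := by
  constructor
  · intro h v
    have h1 := h (Real.exp 0) (Real.exp_pos _) (expE n v) (expE_mem n v)
    rw [Piq_eq (c := c) hq] at h1
    have h2 := (mul_eq_zero.1 h1).resolve_left (Real.exp_pos _).ne'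
    have : cv n (-0) = 0 := by ext i; simp
    rwa [this, add_zero] at h2
  · intro h p0 hp0 p hp
    have e1 : p = expE n (WithLp.toLp 2 fun i => Real.log (p i)) := by
      funext i
      simp only [expE]
      rw [Real.exp_log (hp i)]
    rw [e1, ← Real.exp_log hp0, Piq_eq (c := c) hq, h, mul_zero]

lemma zero_set (hq : IsCostFun n q) (hc : ∀ i, 0 < c i) :
    volume {ξ : Fin n → ℝ |
        mellinT n (fun x => Real.exp (-q x)) (fun i => (c i : ℂ) + I * (ξ i : ℂ)) = 0} = 0 ↔
    volume {ξ : EuclideanSpace ℝ (Fin n) |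
      𝓕 (fun u => (kerH c (fun u => q (expE n u)) u : ℂ)) ξ = 0} = 0 := by
  set S := {ξ : EuclideanSpace ℝ (Fin n) |
      𝓕 (fun u => (kerH c (fun u => q (expE n u)) u : ℂ)) ξ = 0} with hS
  have hr : (-(2 * Real.pi)⁻¹ : ℝ) ≠ 0 := by
    have := Real.pi_pos
    simp [this.ne']
  have e : {ξ : Fin n → ℝ |
        mellinT n (fun x => Real.exp (-q x)) (fun i => (c i : ℂ) + I * (ξ i : ℂ)) = 0} =
      (MeasurableEquiv.toLp 2 (Fin n → ℝ)) ⁻¹' (((-(2 * Real.pi)⁻¹ : ℝ) • ·) ⁻¹' S) := by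
    ext ξ
    simp only [mem_ofPred_eq, mem_preimage, hS]
    rw [mellin_eq hq hc, mul_eq_zero, or_iff_right]
    · rfl
    · apply Complex.Gamma_ne_zero_of_re_pos
      simp only [add_re, re_sum, re_ofNat]
      have := Finset.sum_nonneg (s := Finset.univ) fun i _ => (hc i).le
      simp
      linarith
  have hmp : MeasurePreserving (MeasurableEquiv.toLp 2 (Fin n → ℝ)) volume volume :=
    PiLp.volume_preserving_toLp (Fin n)
  rw [e, hmp.measure_preimage_equiv, Measure.addHaar_preimage_smul _ hr, mul_eq_zero,
    or_iff_right]
  rw [ENNReal.ofReal_eq_zero, not_le, abs_pos]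
  exact inv_ne_zero (pow_ne_zero _ hr)

end Fin4

/-- Theorem: for a cost function `q` and `c ∈ ℝ^n_+`, the profit operator `Π_q` is
injective on `L²_{I-c}(ℝ^n_+)` iff the zero set of `(M e^{-q})(c + iξ)` has Lebesgue
measure zero in `ℝ^n`. -/
theorem piq_injective_L2_iff_mellin_zeros_measure_zero
    (n : ℕ) (hn : 2 ≤ n) (q : (Fin n → ℝ) → ℝ) (hq : IsCostFun n q)
    (c : Fin n → ℝ) (hc : ∀ i, 0 < c i) :
    (∀ f : (Fin n → ℝ) → ℝ, MemL2w n (fun i => 1 - c i) f →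
        (∀ p0 : ℝ, 0 < p0 → ∀ p ∈ posOrth n, Piq n q f p0 p = 0) →
        ∀ᵐ x ∂(volume.restrict (posOrth n)), f x = 0) ↔
      volume {ξ : Fin n → ℝ |
        mellinT n (fun x => Real.exp (-q x)) (fun i => (c i : ℂ) + I * (ξ i : ℂ)) = 0} = 0 := by
  
  obtain ⟨L, hL⟩ := Q_bdd hq
  have hQp : ∀ u, 0 < q (expE n u) := fun u => hq.2.1 _ (expE_mem n u)
  rw [zero_set hq hc, ← core_thm (kerH_integrable hc (Q_cont hq) hQp hL)
    (kerH_memLp hc (Q_cont hq) hQp hL)]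
  constructor
  · intro h g hg hz
    obtain ⟨f, rfl⟩ := gOf_surj (c := c) g
    exact (gOf_ae f).1 (h f ((gOf_mem f).2 hg) ((Piq_iff hq f).2 hz))
  · intro h f hf hz
    exact (gOf_ae f).2 (h _ ((gOf_mem f).1 hf) ((Piq_iff hq f).1 hz))
end
end

section
/- Let n ≥ 2, let q : ℝ^n_+ → ℝ satisfy the cost-function conditions, let c ∈ ℝ^n_+, set α = c_1 + ⋯ + c_n, and let h ∈ L^1_α(ℝ^1_+). Then the operator R^h_q is injective on L^1_{I−c}(ℝ^n_+) (i.e., if f ∈ L^1_{I−c}(ℝ^n_+) and (R^h_q f)(p) = 0 for all p ∈ ℝ^n_+, then f = 0 a.e.) if and only if the set { ξ ∈ ℝ^n : (M e^{−q})(c + iξ) = 0 } is nowhere dense in ℝ^n and the set { τ ∈ ℝ : (Mh)(α + iτ) = 0 } is nowhere dense in ℝ. -/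
open MeasureTheory Complex Set

noncomputable section

/-- Membership in `L¹_c(ℝ^n_+)`: measurable with `∫ |f| x^{c-I} < ∞`. -/
def MemL1w (n : ℕ) (c : Fin n → ℝ) (f : (Fin n → ℝ) → ℝ) : Prop :=
  IntegrableOn (fun x => f x * ∏ i, x i ^ (c i - 1)) (posOrth n)

/-- Membership in `L¹_α(ℝ¹_+)`: measurable with `∫_0^∞ |h(t)| t^{α-1} dt < ∞`. -/
def MemL1w1 (α : ℝ) (h : ℝ → ℝ) : Prop :=
  IntegrableOn (fun t => h t * t ^ (α - 1)) (Ioi (0 : ℝ))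

/-- The operator `(R^h_q f)(p) = ∫_{ℝ^n_+} h(q(p₁x₁,…,pₙxₙ)) f(x) dx`. -/
def Rhq (n : ℕ) (q : (Fin n → ℝ) → ℝ) (h : ℝ → ℝ) (f : (Fin n → ℝ) → ℝ)
    (p : Fin n → ℝ) : ℝ :=
  ∫ x in posOrth n, h (q (fun i => p i * x i)) * f x

open Topology

/-- character -/
def chr {n : ℕ} (ξ u : Fin n → ℝ) : ℂ := cexp (I * ((∑ i, ξ i * u i : ℝ) : ℂ))

lemma chr_norm {n : ℕ} (ξ u : Fin n → ℝ) : ‖chr ξ u‖ = 1 := by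
  rw [chr, mul_comm, Complex.norm_exp_ofReal_mul_I]

lemma chr_cont {n : ℕ} : Continuous (fun p : (Fin n → ℝ) × (Fin n → ℝ) => chr p.1 p.2) := by
  unfold chr; fun_prop

lemma chr_cont2 {n : ℕ} (ξ : Fin n → ℝ) : Continuous (fun u => chr ξ u) := by
  unfold chr; fun_prop

lemma chr_cont1 {n : ℕ} (u : Fin n → ℝ) : Continuous (fun ξ => chr ξ u) := by
  unfold chr; fun_prop

lemma chr_add {n : ℕ} (ξ u v : Fin n → ℝ) : chr ξ (u + v) = chr ξ u * chr ξ v := by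
  unfold chr
  rw [← Complex.exp_add]
  congr 1
  simp only [Pi.add_apply, mul_add, Finset.sum_add_distrib, ofReal_add]

lemma chr_neg_mul {n : ℕ} (ξ u : Fin n → ℝ) : chr ξ (-u) * chr ξ u = 1 := by
  rw [← chr_add]; simp [chr]

lemma chr_neg_left {n : ℕ} (ξ u : Fin n → ℝ) : chr (-ξ) u = chr ξ (-u) := by
  simp [chr]

/-- Fourier transform -/
def FT {n : ℕ} (g : (Fin n → ℝ) → ℂ) (ξ : Fin n → ℝ) : ℂ := ∫ u, g u * chr ξ u

lemma integrable_mul_chr {n : ℕ} {g : (Fin n → ℝ) → ℂ} (hg : Integrable g) (ξ : Fin n → ℝ) :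
    Integrable (fun u => g u * chr ξ u) := by
  refine hg.mul_bdd (c := 1) (chr_cont2 ξ).aestronglyMeasurable ?_
  filter_upwards with u using (chr_norm ξ u).le

lemma FT_cont {n : ℕ} {g : (Fin n → ℝ) → ℂ} (hg : Integrable g) : Continuous (FT g) := by
  unfold FT
  refine continuous_of_dominated (bound := fun u => ‖g u‖) ?_ ?_ hg.norm ?_
  · intro ξ; exact (integrable_mul_chr hg ξ).1
  · intro ξ; filter_upwards with u; simp [chr_norm]
  · filter_upwards with u
    exact continuous_const.mul (chr_cont1 u)

lemma FT_inj {n : ℕ} {F : (Fin n → ℝ) → ℝ} (hF : Integrable F)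
    (h0 : ∀ ξ, FT (fun u => (F u : ℂ)) ξ = 0) : F =ᵐ[volume] 0 := by
  set μ := (volume : Measure (Fin n → ℝ)).withDensity (fun u => ENNReal.ofReal (F u)) with hμ
  set ν := (volume : Measure (Fin n → ℝ)).withDensity (fun u => ENNReal.ofReal (-F u)) with hν
  have f1 : IsFiniteMeasure μ := isFiniteMeasure_withDensity_ofReal hF.2
  have f2 : IsFiniteMeasure ν := isFiniteMeasure_withDensity_ofReal hF.neg.2
  have m1 : AEMeasurable (fun u => (F u).toNNReal) volume := hF.1.aemeasurable.real_toNNReal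
  have m2 : AEMeasurable (fun u => (-F u).toNNReal) volume := hF.neg.1.aemeasurable.real_toNNReal
  have key : μ = ν := by
    apply Measure.ext_of_charFunDual
    ext L
    rw [charFunDual_apply, charFunDual_apply]
    set ξ : Fin n → ℝ := fun i => L (Pi.single i 1) with hξ
    have hL : ∀ v, cexp (L v * I) = chr ξ v := by
      intro v
      have : L v = ∑ i, ξ i * v i := by
        conv_lhs => rw [pi_eq_sum_univ' v, map_sum]
        refine Finset.sum_congr rfl fun i _ => ?_
        rw [map_smul, smul_eq_mul, mul_comm, hξ]
      rw [chr, this, mul_comm]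
    simp_rw [hL]
    have e1 : ∫ v, chr ξ v ∂μ = ∫ v, ((F v).toNNReal : ℂ) * chr ξ v := by
      rw [hμ]
      refine (integral_withDensity_eq_integral_smul₀ m1 _).trans ?_
      rfl
    have e2 : ∫ v, chr ξ v ∂ν = ∫ v, ((-F v).toNNReal : ℂ) * chr ξ v := by
      rw [hν]
      refine (integral_withDensity_eq_integral_smul₀ m2 _).trans ?_
      rfl
    rw [e1, e2, ← sub_eq_zero, ← integral_sub, ← h0 ξ, FT]
    · refine integral_congr_ae ?_
      filter_upwards with v
      rw [← sub_mul]
      congr 1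
      have : ((F v).toNNReal : ℝ) - ((-F v).toNNReal : ℝ) = F v := by
        simp only [Real.coe_toNNReal']
        rcases le_total 0 (F v) with h | h
        · rw [max_eq_left h, max_eq_right (by linarith)]; simp
        · rw [max_eq_right h, max_eq_left (by linarith)]; simp
      exact_mod_cast congrArg (fun x : ℝ => (x : ℂ)) this
    · exact integrable_mul_chr (g := fun v => (((F v).toNNReal : ℝ) : ℂ)) hF.real_toNNReal.ofReal ξ
    · exact integrable_mul_chr (g := fun v => (((-F v).toNNReal : ℝ) : ℂ))
        hF.neg.real_toNNReal.ofReal ξ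
  have h3 := (withDensity_eq_iff hF.1.aemeasurable.ennreal_ofReal
    hF.neg.1.aemeasurable.ennreal_ofReal hF.lintegral_lt_top.ne).1 key
  filter_upwards [h3] with u hu
  rcases le_total 0 (F u) with h | h
  · rw [ENNReal.ofReal_of_nonpos (p := (-F) u) (by simpa using h)] at hu
    simp at hu
    simpa using le_antisymm hu h
  · rw [ENNReal.ofReal_of_nonpos h] at hu
    have := hu.symm
    simp at this
    simpa using le_antisymm h this

lemma FT_corr {n : ℕ} {G F : (Fin n → ℝ) → ℝ} (hG : Integrable G) (hF : Integrable F)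
    (h0 : ∀ w, ∫ u, G (w + u) * F u = 0) (ξ : Fin n → ℝ) :
    FT (fun u => (G u : ℂ)) ξ * FT (fun u => (F u : ℂ)) (-ξ) = 0 := by
  have hg := integrable_mul_chr (g := fun u => (G u : ℂ)) hG.ofReal ξ
  have hf := (integrable_mul_chr (g := fun u => (F u : ℂ)) hF.ofReal (-ξ)).comp_neg
  have := integral_convolution (ContinuousLinearMap.mul ℝ ℂ) hf hg
  rw [integral_neg_eq_self (fun u => (F u : ℂ) * chr (-ξ) u)] at this
  simp only [ContinuousLinearMap.mul_apply'] at this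
  rw [mul_comm]
  refine this.symm.trans ?_
  rw [← integral_zero (Fin n → ℝ) ℂ]
  congr 1
  ext w
  rw [convolution]
  simp only [ContinuousLinearMap.mul_apply']
  have h1 : ∫ t, (F (-t) : ℂ) * chr (-ξ) (-t) * (G (w - t) * chr ξ (w - t)) =
      ∫ t, (fun u => chr ξ w * (((G (w + u) * F u : ℝ)) : ℂ)) (-t) := by
    congr 1
    ext t
    rw [chr_neg_left, neg_neg, sub_eq_add_neg, chr_add]
    push_cast
    linear_combination (chr ξ w * F (-t) * G (w + -t)) * chr_neg_mul ξ t
  refine h1.trans ?_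
  rw [integral_neg_eq_self (fun u => chr ξ w * (((G (w + u) * F u : ℝ)) : ℂ)),
    integral_const_mul, integral_complex_ofReal, h0]
  simp

lemma fwd_aux {n : ℕ} {G : (Fin n → ℝ) → ℝ} (hG : Integrable G)
    (hinj : ∀ F : (Fin n → ℝ) → ℝ, Integrable F → (∀ w, ∫ u, G (w + u) * F u = 0) →
      F =ᵐ[volume] 0) :
    interior {ξ | FT (fun u => (G u : ℂ)) ξ = 0} = ∅ := by
  by_contra hne
  obtain ⟨ξ0, hξ0⟩ := Set.nonempty_iff_ne_empty.2 hne
  obtain ⟨ε, hε, hball⟩ := Metric.mem_nhds_iff.1 (mem_interior_iff_mem_nhds.1 hξ0)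
  have hpi := Real.pi_pos
  let b : ∀ i : Fin n, ContDiffBump (-ξ0 i / (2 * Real.pi)) := fun i =>
    ⟨ε / (4 * Real.pi), ε / (2 * Real.pi), by positivity, by
      apply div_lt_div_of_pos_left hε <;> linarith⟩
  have hcs : ∀ i, HasCompactSupport (fun x => ((b i x : ℝ) : ℂ)) := fun i =>
    (b i).hasCompactSupport.comp_left (g := fun x : ℝ => (x : ℂ)) (by simp)
  have hcd : ∀ i, ContDiff ℝ ((⊤ : ℕ∞) : WithTop ℕ∞) (fun x => ((b i x : ℝ) : ℂ)) := fun i =>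
    Complex.ofRealCLM.contDiff.comp (b i).contDiff
  let φ : Fin n → SchwartzMap ℝ ℂ := fun i => (hcs i).toSchwartzMap (hcd i)
  have hφ : ∀ i x, φ i x = ((b i x : ℝ) : ℂ) := fun i x => rfl
  let Φ : (Fin n → ℝ) → ℂ := fun x => ∏ i, φ i (x i)
  have hΦ : Integrable Φ := Integrable.fintype_prod (fun i => (φ i).integrable)
  let FC : (Fin n → ℝ) → ℂ := fun u => ∏ i, (FourierTransform.fourier (φ i) : SchwartzMap ℝ ℂ) (u i)
  have hFC : Integrable FC := Integrable.fintype_prod (fun i => SchwartzMap.integrable _)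
  have hFCc : Continuous FC := by
    refine continuous_finsetProd _ fun i _ => ?_
    exact (SchwartzMap.continuous _).comp (continuous_apply i)
  have hFCe : ∀ u, FC u = ∫ x, Φ x * chr (fun i => -(2 * Real.pi) * x i) u := by
    intro u
    have : ∀ x : Fin n → ℝ, Φ x * chr (fun i => -(2 * Real.pi) * x i) u =
        ∏ i, (φ i (x i) * cexp (I * ((-(2 * Real.pi) * x i * u i : ℝ) : ℂ))) := by
      intro x
      rw [Finset.prod_mul_distrib, ← Complex.exp_sum, chr]
      congr 2
      push_cast
      rw [Finset.mul_sum]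
    simp_rw [this]
    rw [integral_fintype_prod_volume_eq_prod
      (fun i (y : ℝ) => φ i y * cexp (I * ((-(2 * Real.pi) * y * u i : ℝ) : ℂ)))]
    refine Finset.prod_congr rfl fun i _ => ?_
    rw [SchwartzMap.fourier_coe, Real.fourier_eq']
    refine integral_congr_ae ?_
    filter_upwards with y
    rw [smul_eq_mul, mul_comm]
    congr 2
    simp
    ring
  have hprod : ∀ w, Integrable (fun p : (Fin n → ℝ) × (Fin n → ℝ) =>
      ((G (w + p.1) : ℂ) * Φ p.2) * chr (fun i => -(2 * Real.pi) * p.2 i) p.1)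
      (volume.prod volume) := by
    intro w
    have h1 : Integrable (fun u => (G (w + u) : ℂ)) := (hG.comp_add_left w).ofReal
    refine (h1.mul_prod hΦ).mul_bdd (c := 1) ?_ ?_
    · apply Continuous.aestronglyMeasurable
      unfold chr; fun_prop
    · filter_upwards with p using (chr_norm _ _).le
  have hin : ∀ w u, ∫ x, ((G (w + u) : ℂ) * Φ x) * chr (fun i => -(2 * Real.pi) * x i) u =
      G (w + u) * FC u := by
    intro w u
    simp_rw [mul_assoc]
    rw [integral_const_mul, hFCe]
  have hint : ∀ w, Integrable (fun u => (G (w + u) : ℂ) * FC u) := by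
    intro w
    have := (hprod w).integral_prod_left
    simpa only [hin] using this
  have hzero : ∀ w, ∫ u, (G (w + u) : ℂ) * FC u = 0 := by
    intro w
    simp_rw [← hin]
    rw [integral_integral_swap (hprod w)]
    rw [← integral_zero (Fin n → ℝ) ℂ]
    congr 1
    ext x
    have h1 : ∫ u, ((G (w + u) : ℂ) * Φ x) * chr (fun i => -(2 * Real.pi) * x i) u =
       ∫ u, (fun v => (Φ x * chr (fun i => -(2 * Real.pi) * x i) (-w)) *
          (G v * chr (fun i => -(2 * Real.pi) * x i) v)) (w + u) := by
      congr 1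
      ext u
      simp only [chr_add]
      linear_combination (-(G (w + u) * Φ x * chr (fun i => -(2 * Real.pi) * x i) u)) *
        chr_neg_mul (fun i => -(2 * Real.pi) * x i) w
    rw [h1, integral_add_left_eq_self (fun v => (Φ x * chr (fun i => -(2 * Real.pi) * x i) (-w)) *
          (G v * chr (fun i => -(2 * Real.pi) * x i) v)), integral_const_mul]
    by_cases hx : Φ x = 0
    · simp [hx]
    · have : FT (fun u => (G u : ℂ)) (fun i => -(2 * Real.pi) * x i) = 0 := by
        apply hball
        rw [Metric.mem_ball, dist_pi_lt_iff hε]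
        intro i
        have h2 : φ i (x i) ≠ 0 := by
          intro h; exact hx (Finset.prod_eq_zero (Finset.mem_univ i) h)
        have h3 : x i ∈ Function.support (b i) := by
          intro h; rw [hφ, h] at h2; simp at h2
        rw [(b i).support_eq, Metric.mem_ball, Real.dist_eq] at h3
        change |x i - -ξ0 i / (2 * Real.pi)| < ε / (2 * Real.pi) at h3
        rw [Real.dist_eq]
        have h4 : -(2 * Real.pi) * x i - ξ0 i =
            -(2 * Real.pi) * (x i - -ξ0 i / (2 * Real.pi)) := by field_simp; ring
        rw [h4, abs_mul, abs_neg, abs_of_pos (by positivity : 0 < 2 * Real.pi)]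
        rw [lt_div_iff₀ (by positivity)] at h3
        linarith
      rw [FT] at this
      rw [this, mul_zero]
  have hre := hinj (fun u => (FC u).re) hFC.re (by
    intro w
    have := reCLM.integral_comp_comm (hint w)
    rw [hzero w] at this
    simpa using this)
  have him := hinj (fun u => (FC u).im) hFC.im (by
    intro w
    have := imCLM.integral_comp_comm (hint w)
    rw [hzero w] at this
    simpa using this)
  have hFC0 : FC =ᵐ[volume] fun _ => 0 := by
    filter_upwards [hre, him] with u h1 h2
    exact Complex.ext (by simpa using h1) (by simpa using h2)
  have hFC1 : FC = fun _ => 0 := (hFCc.ae_eq_iff_eq volume continuous_const).1 hFC0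
  have hex : ∀ i, ∃ y, (FourierTransform.fourier (φ i) : SchwartzMap ℝ ℂ) y ≠ 0 := by
    intro i
    by_contra! hcon
    have h1 : (FourierTransform.fourier (φ i) : SchwartzMap ℝ ℂ) = 0 := by ext y; exact hcon y
    have h2 : φ i = 0 := by
      have := FourierTransform.fourierInv_fourier_eq (F := SchwartzMap ℝ ℂ) (φ i)
      rw [← this, h1]
      exact FourierTransform.fourierInv_zero
    have h3 : φ i (-ξ0 i / (2 * Real.pi)) = 1 := by
      rw [hφ, (b i).one_of_mem_closedBall]
      · simp
      · simp only [Metric.mem_closedBall, dist_self]; exact (b i).rIn_pos.le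
    rw [h2] at h3
    simp at h3
  choose y hy using hex
  have := congrFun hFC1 y
  exact (Finset.prod_ne_zero_iff.2 fun i _ => hy i) this

lemma bwd_aux {n : ℕ} {G F : (Fin n → ℝ) → ℝ} (hG : Integrable G) (hF : Integrable F)
    (hd : interior {ξ | FT (fun u => (G u : ℂ)) ξ = 0} = ∅)
    (h0 : ∀ w, ∫ u, G (w + u) * F u = 0) : F =ᵐ[volume] 0 := by
  apply FT_inj hF
  have hc : Continuous (fun ξ => FT (fun u => (F u : ℂ)) (-ξ)) :=
    (FT_cont hF.ofReal).comp continuous_neg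
  have hdense : Dense {ξ | FT (fun u => (G u : ℂ)) ξ = 0}ᶜ := interior_eq_empty_iff_dense_compl.1 hd
  have := hc.ext_on hdense (continuous_const (y := (0 : ℂ))) (fun ξ hξ => by
    have := FT_corr hG hF h0 ξ
    exact (mul_eq_zero.1 this).resolve_left hξ)
  intro ξ
  simpa using congrFun this (-ξ)

lemma shear_lint {n : ℕ} {Q : (Fin n → ℝ) → ℝ} (hQc : Measurable Q)
    (hQ : ∀ u t, Q (u + fun _ => t) = Q u + t) {w : (Fin n → ℝ) → ENNReal} (hw : Measurable w)
    (hwi : ∀ u t, w (u + fun _ => t) = w u) {g e : ℝ → ENNReal} (hg : Measurable g)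
    (he : Measurable e) :
    (∫⁻ u, w u * g (Q u)) * ∫⁻ s, e s = (∫⁻ u, w u * e (Q u)) * ∫⁻ s, g s := by
  calc (∫⁻ u, w u * g (Q u)) * ∫⁻ s, e s
      = ∫⁻ u, ∫⁻ t, w u * g (Q u) * e (t + Q u) := by
        rw [← lintegral_mul_const _ (by fun_prop)]
        refine lintegral_congr fun u => ?_
        rw [lintegral_const_mul _ (by fun_prop), lintegral_add_right_eq_self]
    _ = ∫⁻ t, ∫⁻ u, w u * g (Q u) * e (t + Q u) := by
        rw [lintegral_lintegral_swap]
        exact Measurable.aemeasurable (by fun_prop)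
    _ = ∫⁻ t, ∫⁻ u, w u * e (Q u) * g (Q u - t) := by
        refine lintegral_congr fun t => ?_
        rw [← lintegral_add_right_eq_self (fun u => w u * e (Q u) * g (Q u - t)) (fun _ => t)]
        refine lintegral_congr fun u => ?_
        rw [hwi, hQ, add_sub_cancel_right, add_comm t]
        ring
    _ = ∫⁻ u, ∫⁻ t, w u * e (Q u) * g (Q u - t) := by
        rw [lintegral_lintegral_swap]
        exact Measurable.aemeasurable (by fun_prop)
    _ = _ := by
        rw [← lintegral_mul_const _ (by fun_prop)]
        refine lintegral_congr fun u => ?_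
        rw [lintegral_const_mul _ (by fun_prop), lintegral_sub_left_eq_self]

lemma shear_int {n : ℕ} {Q : (Fin n → ℝ) → ℝ} (hQc : Measurable Q)
    (hQ : ∀ u t, Q (u + fun _ => t) = Q u + t) {w : (Fin n → ℝ) → ℂ} (hw : Measurable w)
    (hwi : ∀ u t, w (u + fun _ => t) = w u) {g e : ℝ → ℂ} (hg : Measurable g)
    (he : Measurable e) (hg1 : Integrable g) (he1 : Integrable e)
    (hwg : Integrable (fun u => w u * g (Q u))) (hwe : Integrable (fun u => w u * e (Q u))) :
    (∫ u, w u * g (Q u)) * ∫ s, e s = (∫ u, w u * e (Q u)) * ∫ s, g s := by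
  calc (∫ u, w u * g (Q u)) * ∫ s, e s
      = ∫ u, ∫ t, w u * g (Q u) * e (t + Q u) := by
        rw [← integral_mul_const]
        refine integral_congr_ae ?_
        filter_upwards with u
        rw [integral_const_mul, integral_add_right_eq_self]
    _ = ∫ t, ∫ u, w u * g (Q u) * e (t + Q u) := by
        rw [integral_integral_swap]
        have hm : AEStronglyMeasurable (Function.uncurry
            (fun (u : Fin n → ℝ) (t : ℝ) => w u * g (Q u) * e (t + Q u)))
            (volume.prod volume) := by
          refine Measurable.aestronglyMeasurable ?_
          unfold Function.uncurry
          fun_prop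
        rw [integrable_prod_iff hm]
        refine ⟨?_, ?_⟩
        · filter_upwards with u
          exact (he1.comp_add_right (Q u)).const_mul (w u * g (Q u))
        · simp only [Function.uncurry, norm_mul]
          simp_rw [integral_const_mul]
          have : ∀ u, ∫ t, ‖e (t + Q u)‖ = ∫ t, ‖e t‖ := fun u =>
            integral_add_right_eq_self (fun t => ‖e t‖) (Q u)
          simp_rw [this]
          have h2 := hwg.norm
          simp only [norm_mul] at h2
          exact h2.mul_const _
    _ = ∫ t, ∫ u, w u * e (Q u) * g (Q u - t) := by
        refine integral_congr_ae ?_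
        filter_upwards with t
        rw [← integral_add_right_eq_self (fun u => w u * e (Q u) * g (Q u - t)) (fun _ => t)]
        refine integral_congr_ae ?_
        filter_upwards with u
        rw [hwi, hQ, add_sub_cancel_right, add_comm t]
        ring
    _ = ∫ u, ∫ t, w u * e (Q u) * g (Q u - t) := by
        symm
        rw [integral_integral_swap]
        have hm : AEStronglyMeasurable (Function.uncurry
            (fun (u : Fin n → ℝ) (t : ℝ) => w u * e (Q u) * g (Q u - t)))
            (volume.prod volume) := by
          refine Measurable.aestronglyMeasurable ?_
          unfold Function.uncurry
          fun_prop
        rw [integrable_prod_iff hm]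
        refine ⟨?_, ?_⟩
        · filter_upwards with u
          exact (hg1.comp_sub_left (Q u)).const_mul (w u * e (Q u))
        · simp only [Function.uncurry, norm_mul]
          simp_rw [integral_const_mul]
          have : ∀ u, ∫ t, ‖g (Q u - t)‖ = ∫ t, ‖g t‖ := fun u =>
            integral_sub_left_eq_self (fun t => ‖g t‖) volume (Q u)
          simp_rw [this]
          have h2 := hwe.norm
          simp only [norm_mul] at h2
          exact h2.mul_const _
    _ = _ := by
        rw [← integral_mul_const]
        refine integral_congr_ae ?_
        filter_upwards with u
        rw [integral_const_mul, integral_sub_left_eq_self]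

lemma qmp {n : ℕ} {Q : (Fin n → ℝ) → ℝ} (hQc : Measurable Q)
    (hQ : ∀ u t, Q (u + fun _ => t) = Q u + t) :
    Measure.QuasiMeasurePreserving Q volume volume := by
  refine ⟨hQc, ?_⟩
  refine Measure.AbsolutelyContinuous.mk fun s hs h0 => ?_
  rw [Measure.map_apply hQc hs]
  have := shear_lint hQc hQ (w := fun _ => 1) measurable_const (by simp)
    (g := s.indicator 1) (e := fun _ => 1) (measurable_one.indicator hs) measurable_const
  have h1 : ∫⁻ t, s.indicator (1 : ℝ → ENNReal) t = 0 := by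
    rw [lintegral_indicator_one hs, h0]
  have h2 : ∫⁻ u, (1 : ENNReal) * s.indicator (1 : ℝ → ENNReal) (Q u) = volume (Q ⁻¹' s) := by
    rw [← lintegral_indicator_one (hQc hs)]
    refine lintegral_congr fun u => ?_
    simp only [Set.indicator, one_mul, Set.mem_preimage]
    rfl
  rw [h1, h2, mul_zero] at this
  refine (mul_eq_zero.1 this).resolve_right ?_
  simp

/-- Main factorization in logarithmic coordinates. -/
lemma factor {n : ℕ} {Q : (Fin n → ℝ) → ℝ} (hQc : Measurable Q)
    (hQ : ∀ u t, Q (u + fun _ => t) = Q u + t) (c : Fin n → ℝ) (α : ℝ) (hα : α = ∑ i, c i)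
    {H e : ℝ → ℝ} (hH : Integrable H) (he : Integrable e) (hem : Measurable e)
    (hepos : ∀ s, 0 < e s)
    (hWe : Integrable (fun u => Real.exp (∑ i, c i * u i - α * Q u) * e (Q u))) :
    Integrable (fun u => Real.exp (∑ i, c i * u i - α * Q u) * H (Q u)) ∧
    ∀ ξ : Fin n → ℝ,
      FT (fun u => ((Real.exp (∑ i, c i * u i - α * Q u) * H (Q u) : ℝ) : ℂ)) ξ *
        ∫ s, (e s : ℂ) * cexp (I * (((∑ i, ξ i) * s : ℝ) : ℂ)) =
      FT (fun u => ((Real.exp (∑ i, c i * u i - α * Q u) * e (Q u) : ℝ) : ℂ)) ξ *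
        ∫ s, (H s : ℂ) * cexp (I * (((∑ i, ξ i) * s : ℝ) : ℂ)) := by
  set H' := hH.1.mk H with hH'
  have hHm : Measurable H' := hH.1.stronglyMeasurable_mk.measurable
  have hHH : H =ᵐ[volume] H' := hH.1.ae_eq_mk
  have hHi : Integrable H' := hH.congr hHH
  have hQQ : (fun u => H (Q u)) =ᵐ[volume] fun u => H' (Q u) := (qmp hQc hQ).ae_eq_comp hHH
  set W : (Fin n → ℝ) → ℝ := fun u => Real.exp (∑ i, c i * u i - α * Q u) with hW
  have hWm : Measurable W := by rw [hW]; fun_prop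
  have hWi : ∀ u t, W (u + fun _ => t) = W u := by
    intro u t
    simp only [hW, hQ, Pi.add_apply, mul_add, Finset.sum_add_distrib, ← Finset.sum_mul, ← hα]
    congr 1; ring
  have hGi' : Integrable (fun u => W u * H' (Q u)) := by
    refine ⟨Measurable.aestronglyMeasurable (by fun_prop), ?_⟩
    have hs := shear_lint hQc hQ (w := fun u => ‖W u‖ₑ) (by fun_prop)
      (fun u t => by rw [hWi]) (g := fun s => ‖H' s‖ₑ) (e := fun s => ‖e s‖ₑ)
      (by fun_prop) (by fun_prop)
    simp_rw [← enorm_mul] at hs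
    have a1 : ∫⁻ s, ‖e s‖ₑ ≠ 0 := by
      rw [Ne, lintegral_eq_zero_iff (by fun_prop)]
      intro h
      have : ∀ᵐ s : ℝ, False := by
        filter_upwards [h] with s hs
        have := hepos s
        simp at hs
        linarith
      rw [Filter.eventually_false_iff_eq_bot, ae_eq_bot] at this
      exact NeZero.ne _ this
    have a2 : (∫⁻ u, ‖W u * e (Q u)‖ₑ) * ∫⁻ s, ‖H' s‖ₑ < ⊤ := ENNReal.mul_lt_top hWe.2 hHi.2
    rw [← hs] at a2
    rw [hasFiniteIntegral_def]
    by_contra hcon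
    rw [not_lt, top_le_iff] at hcon
    rw [hcon, ENNReal.top_mul a1] at a2
    exact lt_irrefl _ a2
  have hGG : (fun u => W u * H (Q u)) =ᵐ[volume] fun u => W u * H' (Q u) := by
    filter_upwards [hQQ] with u hu
    rw [hu]
  refine ⟨hGi'.congr hGG.symm, fun ξ => ?_⟩
  set σ := ∑ i, ξ i with hσ
  let w : (Fin n → ℝ) → ℂ := fun u => (W u : ℂ) * chr ξ u * cexp (-(I * ((σ * Q u : ℝ) : ℂ)))
  have hwm : Measurable w := by
    have := (chr_cont2 ξ).measurable
    fun_prop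
  have hwi : ∀ u t, w (u + fun _ => t) = w u := by
    intro u t
    simp only [w, hWi, chr_add, hQ]
    have : chr ξ (fun _ => t) * cexp (-(I * ((σ * (Q u + t) : ℝ) : ℂ))) =
        cexp (-(I * ((σ * Q u : ℝ) : ℂ))) := by
      rw [chr, ← Finset.sum_mul, ← hσ, ← Complex.exp_add]
      congr 1
      push_cast
      ring
    rw [mul_assoc, mul_assoc, this]
    ring
  have hwk : ∀ (k : ℝ → ℝ) u, w u * ((k (Q u) : ℂ) * cexp (I * ((σ * Q u : ℝ) : ℂ))) =
      ((W u * k (Q u) : ℝ) : ℂ) * chr ξ u := by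
    intro k u
    simp only [w]
    have : cexp (-(I * ((σ * Q u : ℝ) : ℂ))) * cexp (I * ((σ * Q u : ℝ) : ℂ)) = 1 := by
      rw [← Complex.exp_add]; simp
    push_cast at this ⊢
    linear_combination (W u * chr ξ u * k (Q u)) * this
  have hki : ∀ k : ℝ → ℝ, Integrable k →
      Integrable (fun s => (k s : ℂ) * cexp (I * ((σ * s : ℝ) : ℂ))) := by
    intro k hk
    refine (hk.ofReal (𝕜 := ℂ)).mul_bdd (c := 1) ?_ ?_
    · exact Continuous.aestronglyMeasurable (by fun_prop)
    · filter_upwards with s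
      rw [mul_comm, Complex.norm_exp_ofReal_mul_I]
  have key := shear_int hQc hQ hwm hwi
    (g := fun s => (H' s : ℂ) * cexp (I * ((σ * s : ℝ) : ℂ)))
    (e := fun s => (e s : ℂ) * cexp (I * ((σ * s : ℝ) : ℂ))) (by fun_prop) (by fun_prop)
    (hki _ hHi) (hki _ he)
    (by simp_rw [hwk H']
        exact integrable_mul_chr (g := fun u => ((W u * H' (Q u) : ℝ) : ℂ)) hGi'.ofReal ξ)
    (by simp_rw [hwk e]
        exact integrable_mul_chr (g := fun u => ((W u * e (Q u) : ℝ) : ℂ)) hWe.ofReal ξ)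
  simp_rw [hwk H', hwk e] at key
  have r1 : FT (fun u => ((W u * H (Q u) : ℝ) : ℂ)) ξ =
      ∫ u, ((W u * H' (Q u) : ℝ) : ℂ) * chr ξ u := by
    refine integral_congr_ae ?_
    filter_upwards [hGG] with u hu
    rw [hu]
  have r2 : ∫ s, (H s : ℂ) * cexp (I * ((σ * s : ℝ) : ℂ)) =
      ∫ s, (H' s : ℂ) * cexp (I * ((σ * s : ℝ) : ℂ)) := by
    refine integral_congr_ae ?_
    filter_upwards [hHH] with u hu
    rw [hu]
  rw [r1, r2]
  exact key

/-- coordinatewise exponential -/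
def expm {n : ℕ} (u : Fin n → ℝ) : Fin n → ℝ := fun i => Real.exp (u i)

lemma expm_mem {n : ℕ} (u : Fin n → ℝ) : expm u ∈ posOrth n := fun i => Real.exp_pos _

lemma expm_inj {n : ℕ} : Function.Injective (expm (n := n)) := by
  intro u v h
  ext i
  exact Real.exp_injective (congrFun h i)

lemma expm_log {n : ℕ} {x : Fin n → ℝ} (hx : x ∈ posOrth n) :
    expm (fun i => Real.log (x i)) = x := by
  ext i; exact Real.exp_log (hx i)

lemma expm_image {n : ℕ} : expm '' (univ : Set (Fin n → ℝ)) = posOrth n := by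
  ext x
  constructor
  · rintro ⟨u, -, rfl⟩; exact expm_mem u
  · intro hx; exact ⟨_, trivial, expm_log hx⟩

lemma expm_cont {n : ℕ} : Continuous (expm (n := n)) := by
  unfold expm; fun_prop

/-- derivative of expm -/
def expD {n : ℕ} (u : Fin n → ℝ) : (Fin n → ℝ) →L[ℝ] (Fin n → ℝ) :=
  ContinuousLinearMap.pi fun i =>
    (ContinuousLinearMap.toSpanSingleton ℝ (Real.exp (u i))).comp (ContinuousLinearMap.proj i)

lemma expm_deriv {n : ℕ} (u : Fin n → ℝ) : HasFDerivAt expm (expD u) u := by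
  rw [hasFDerivAt_pi']
  intro i
  have h1 := (Real.hasDerivAt_exp (u i)).hasFDerivAt
  have h2 := (ContinuousLinearMap.proj (R := ℝ) (φ := fun _ : Fin n => ℝ) i).hasFDerivAt (x := u)
  exact h1.comp u h2

lemma expD_det {n : ℕ} (u : Fin n → ℝ) : |(expD u).det| = Real.exp (∑ i, u i) := by
  rw [expD, ContinuousLinearMap.det_pi, Real.exp_sum, abs_of_nonneg]
  · refine Finset.prod_congr rfl fun i _ => ?_
    simp
  · refine Finset.prod_nonneg fun i _ => ?_
    simp [Real.exp_nonneg]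

lemma cov_int {n : ℕ} {V : Type*} [NormedAddCommGroup V] [NormedSpace ℝ V]
    (g : (Fin n → ℝ) → V) :
    ∫ x in posOrth n, g x = ∫ u, Real.exp (∑ i, u i) • g (expm u) := by
  rw [← expm_image, integral_image_eq_integral_abs_det_fderiv_smul volume MeasurableSet.univ
    (fun u _ => (expm_deriv u).hasFDerivWithinAt) expm_inj.injOn]
  simp_rw [expD_det]
  rw [Measure.restrict_univ]

lemma cov_integrable {n : ℕ} {V : Type*} [NormedAddCommGroup V] [NormedSpace ℝ V]
    (g : (Fin n → ℝ) → V) :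
    IntegrableOn g (posOrth n) ↔ Integrable (fun u => Real.exp (∑ i, u i) • g (expm u)) := by
  rw [← expm_image, integrableOn_image_iff_integrableOn_abs_det_fderiv_smul volume
    MeasurableSet.univ (fun u _ => (expm_deriv u).hasFDerivWithinAt) expm_inj.injOn]
  simp_rw [expD_det]
  rw [integrableOn_univ]

lemma exp_image1 : Real.exp '' univ = Ioi 0 := by
  rw [image_univ, Real.range_exp]

lemma cov1_int {V : Type*} [NormedAddCommGroup V] [NormedSpace ℝ V] (g : ℝ → V) :
    ∫ x in Ioi (0 : ℝ), g x = ∫ u, Real.exp u • g (Real.exp u) := by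
  rw [← exp_image1, integral_image_eq_integral_abs_deriv_smul MeasurableSet.univ
    (fun u _ => (Real.hasDerivAt_exp u).hasDerivWithinAt) Real.exp_injective.injOn]
  simp_rw [Real.abs_exp]
  rw [Measure.restrict_univ]

lemma cov1_integrable {V : Type*} [NormedAddCommGroup V] [NormedSpace ℝ V] (g : ℝ → V) :
    IntegrableOn g (Ioi (0 : ℝ)) ↔ Integrable (fun u => Real.exp u • g (Real.exp u)) := by
  rw [← exp_image1, integrableOn_image_iff_integrableOn_abs_deriv_smul MeasurableSet.univ
    (fun u _ => (Real.hasDerivAt_exp u).hasDerivWithinAt) Real.exp_injective.injOn]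
  simp_rw [Real.abs_exp]
  rw [integrableOn_univ]

lemma posOrth_open (n : ℕ) : IsOpen (posOrth n) := by
  have : posOrth n = Set.pi univ (fun _ => Ioi (0 : ℝ)) := by
    ext x; simp [posOrth]
  rw [this]
  exact isOpen_set_pi Set.finite_univ fun _ _ => isOpen_Ioi

lemma ae_orth {n : ℕ} (f : (Fin n → ℝ) → ℝ) :
    (∀ᵐ x ∂(volume.restrict (posOrth n)), f x = 0) ↔ ∀ᵐ u, f (expm u) = 0 := by
  rw [ae_restrict_iff' (posOrth_open n).measurableSet]
  constructor
  · intro h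
    have h0 : volume {x | ¬ (x ∈ posOrth n → f x = 0)} = 0 := ae_iff.1 h
    have h1 := addHaar_image_eq_zero_of_differentiableOn_of_addHaar_eq_zero volume
      (f := fun (x : Fin n → ℝ) i => Real.log (x i)) (s := {x | ¬ (x ∈ posOrth n → f x = 0)})
      (by
        intro x hx
        simp only [Set.mem_ofPred_eq, Classical.not_imp] at hx
        apply DifferentiableAt.differentiableWithinAt
        rw [differentiableAt_pi]
        intro i
        exact (differentiableAt_apply i x).log (hx.1 i).ne') h0
    rw [ae_iff]
    refine measure_mono_null ?_ h1
    intro u hu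
    refine ⟨expm u, ?_, ?_⟩
    · simp only [Set.mem_ofPred_eq, Classical.not_imp]
      exact ⟨expm_mem u, hu⟩
    · ext i; simp [expm]
  · intro h
    have h1 := addHaar_image_eq_zero_of_differentiableOn_of_addHaar_eq_zero volume
      (f := expm) (s := {u | ¬ f (expm u) = 0})
      (fun u _ => (expm_deriv u).differentiableAt.differentiableWithinAt) (ae_iff.1 h)
    rw [ae_iff]
    refine measure_mono_null ?_ h1
    intro x hx
    simp only [Set.mem_ofPred_eq, Classical.not_imp] at hx
    refine ⟨_, ?_, expm_log hx.1⟩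
    simp only [Set.mem_ofPred_eq, expm_log hx.1]
    exact hx.2

lemma exp_cpow (s : ℝ) (z : ℂ) : ((Real.exp s : ℝ) : ℂ) ^ z = cexp (z * s) := by
  rw [Complex.cpow_def_of_ne_zero (by exact_mod_cast (Real.exp_pos s).ne'),
    ← Complex.ofReal_log (Real.exp_pos s).le, Real.log_exp, mul_comm]

lemma mellin_log (k : ℝ → ℝ) (α τ : ℝ) :
    mellin (fun t => (k t : ℂ)) ((α : ℂ) + I * (τ : ℂ)) =
      ∫ s, ((k (Real.exp s) * Real.exp (α * s) : ℝ) : ℂ) * cexp (I * ((τ * s : ℝ) : ℂ)) := by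
  rw [mellin, cov1_int]
  congr 1
  ext s
  rw [exp_cpow, Complex.real_smul, smul_eq_mul]
  push_cast
  have : cexp (s : ℂ) * cexp (((α : ℂ) + I * (τ : ℂ) - 1) * s) =
      cexp (α * s) * cexp (I * (τ * s)) := by
    rw [← Complex.exp_add, ← Complex.exp_add]; congr 1; ring
  linear_combination (k (Real.exp s) : ℂ) * this

lemma mellinT_log {n : ℕ} (g : (Fin n → ℝ) → ℝ) (c ξ : Fin n → ℝ) :
    mellinT n g (fun i => (c i : ℂ) + I * (ξ i : ℂ)) =
      FT (fun u => ((Real.exp (∑ i, c i * u i) * g (expm u) : ℝ) : ℂ)) ξ := by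
  rw [mellinT, cov_int, FT]
  congr 1
  ext u
  have hx : ∀ i, expm u i = Real.exp (u i) := fun i => rfl
  simp_rw [hx, exp_cpow]
  rw [← Complex.exp_sum, Complex.real_smul, chr]
  push_cast
  have : cexp (∑ i, (u i : ℂ)) * cexp (∑ i, ((c i : ℂ) + I * (ξ i : ℂ) - 1) * u i) =
      cexp (∑ i, (c i : ℂ) * u i) * cexp (I * ∑ i, (ξ i : ℂ) * u i) := by
    rw [← Complex.exp_add, ← Complex.exp_add, Finset.mul_sum, ← Finset.sum_add_distrib,
      ← Finset.sum_add_distrib]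
    congr 1
    refine Finset.sum_congr rfl fun i _ => ?_
    ring
  linear_combination (g (expm u) : ℂ) * this

lemma FT1_cont {H : ℝ → ℝ} (hH : Integrable H) :
    Continuous (fun τ : ℝ => ∫ s, (H s : ℂ) * cexp (I * ((τ * s : ℝ) : ℂ))) := by
  refine continuous_of_dominated (bound := fun u => ‖H u‖) ?_ ?_ hH.norm ?_
  · intro ξ
    exact (hH.ofReal (𝕜 := ℂ)).1.mul (Continuous.aestronglyMeasurable (by fun_prop))
  · intro ξ; filter_upwards with u
    rw [norm_mul, mul_comm I, Complex.norm_exp_ofReal_mul_I]; simp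
  · filter_upwards with u
    fun_prop

lemma exp_int1 {a k : ℝ} (ha : 0 < a) (hk : 0 < k) :
    Integrable (fun s => Real.exp (a * s - k * Real.exp s)) := by
  have := integrableOn_rpow_mul_exp_neg_mul_rpow (p := 1) (s := a - 1) (b := k) (by linarith)
    one_pos hk
  rw [cov1_integrable] at this
  refine this.congr ?_
  filter_upwards with s
  rw [Real.rpow_one, smul_eq_mul, ← Real.exp_mul, ← Real.exp_add, ← Real.exp_add]
  congr 1; ring

lemma cost_bound {n : ℕ} {q : (Fin n → ℝ) → ℝ} (hq : IsCostFun n q) :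
    ∃ B : ℝ, 0 < B ∧ ∀ x ∈ posOrth n, ∀ i, x i ≤ B * q x := by
  obtain ⟨-, hpos, hhom, hbd⟩ := hq
  obtain ⟨B, hB⟩ := (hbd 1).exists_norm_le
  refine ⟨max B 1, by positivity, fun x hx i => ?_⟩
  have hqx := hpos x hx
  have hy : (fun i => (q x)⁻¹ * x i) ∈ posOrth n := fun i => mul_pos (inv_pos.2 hqx) (hx i)
  have h1 := hB (fun i => (q x)⁻¹ * x i) ⟨hy, by
    rw [hhom _ (inv_pos.2 hqx) x hx]; field_simp⟩
  have h2 := (norm_le_pi_norm _ i).trans h1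
  have h3 : (q x)⁻¹ * x i ≤ max B 1 := (le_abs_self _).trans (h2.trans (le_max_left _ _))
  rw [inv_mul_le_iff₀ hqx] at h3
  linarith

lemma exp_q_int {n : ℕ} (hn : 2 ≤ n) {q : (Fin n → ℝ) → ℝ} (hq : IsCostFun n q)
    {c : Fin n → ℝ} (hc : ∀ i, 0 < c i) :
    Integrable (fun u => Real.exp (∑ i, c i * u i) * Real.exp (-q (expm u))) := by
  obtain ⟨B, hB, hb⟩ := cost_bound hq
  have hn0 : (0 : ℝ) < n := by exact_mod_cast (by omega : 0 < n)
  have hqc : Continuous (fun u => q (expm u)) :=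
    hq.1.continuousOn.comp_continuous expm_cont expm_mem
  have h1 : Integrable (fun u : Fin n → ℝ =>
      ∏ i, Real.exp (c i * u i - (1 / (n * B)) * Real.exp (u i))) :=
    Integrable.fintype_prod (f := fun i (s : ℝ) => Real.exp (c i * s - (1 / (n * B)) * Real.exp s))
      (fun i => exp_int1 (hc i) (by positivity))
  refine h1.mono' (Continuous.aestronglyMeasurable
    (Continuous.mul (by fun_prop) (Real.continuous_exp.comp hqc.neg))) ?_
  filter_upwards with u
  rw [← Real.exp_add, Real.norm_of_nonneg (Real.exp_nonneg _), ← Real.exp_sum]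
  rw [Real.exp_le_exp, Finset.sum_sub_distrib, ← Finset.mul_sum]
  have h2 : ∑ i, Real.exp (u i) ≤ ∑ i : Fin n, B * q (expm u) :=
    Finset.sum_le_sum fun i _ => hb (expm u) (expm_mem u) i
  rw [Finset.sum_const, Finset.card_univ, Fintype.card_fin, nsmul_eq_mul] at h2
  have h3 : 1 / (n * B) * ∑ i, Real.exp (u i) ≤ q (expm u) := by
    rw [one_div, inv_mul_le_iff₀ (by positivity)]; linarith
  linarith

/-- Theorem: `R^h_q` is injective on `L¹_{I-c}(ℝ^n_+)` iff the zero set of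
`(M e^{-q})` on the plane `Re z = c` is nowhere dense and the zero set of `Mh`
on the line `Re s = α` is nowhere dense. -/
theorem rhq_injective_L1_iff
    (n : ℕ) (hn : 2 ≤ n) (q : (Fin n → ℝ) → ℝ) (hq : IsCostFun n q)
    (c : Fin n → ℝ) (hc : ∀ i, 0 < c i) (α : ℝ) (hα : α = ∑ i, c i)
    (h : ℝ → ℝ) (hh : MemL1w1 α h) :
    (∀ f : (Fin n → ℝ) → ℝ, MemL1w n (fun i => 1 - c i) f →
        (∀ p ∈ posOrth n, Rhq n q h f p = 0) →
        ∀ᵐ x ∂(volume.restrict (posOrth n)), f x = 0) ↔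
      (IsNowhereDense {ξ : Fin n → ℝ |
          mellinT n (fun x => Real.exp (-q x)) (fun i => (c i : ℂ) + I * (ξ i : ℂ)) = 0} ∧
        IsNowhereDense {τ : ℝ |
          mellin (fun t => (h t : ℂ)) ((α : ℂ) + I * (τ : ℂ)) = 0}) := by
  have hα0 : 0 < α := by
    rw [hα]
    exact Finset.sum_pos (fun i _ => hc i) ⟨⟨0, by omega⟩, Finset.mem_univ _⟩
  have hqpos : ∀ u, 0 < q (expm u) := fun u => hq.2.1 _ (expm_mem u)
  have hqc : Continuous (fun u => q (expm u)) :=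
    hq.1.continuousOn.comp_continuous expm_cont expm_mem
  set Q : (Fin n → ℝ) → ℝ := fun u => Real.log (q (expm u)) with hQdef
  have hQc : Continuous Q := hqc.log fun u => (hqpos u).ne'
  have hQexp : ∀ u, Real.exp (Q u) = q (expm u) := fun u => Real.exp_log (hqpos u)
  have hQ : ∀ u t, Q (u + fun _ => t) = Q u + t := by
    intro u t
    have h1 : expm (u + fun _ => t) = fun i => Real.exp t * expm u i := by
      ext i
      simp only [expm, Pi.add_apply, Real.exp_add]
      ring
    simp only [hQdef]
    rw [h1, hq.2.2.1 _ (Real.exp_pos t) _ (expm_mem u),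
      Real.log_mul (Real.exp_pos t).ne' (hqpos u).ne', Real.log_exp, add_comm]
  set e : ℝ → ℝ := fun s => Real.exp (-Real.exp s) * Real.exp (α * s) with he
  set H : ℝ → ℝ := fun s => h (Real.exp s) * Real.exp (α * s) with hH
  have hei : Integrable e := by
    refine (exp_int1 hα0 one_pos).congr ?_
    filter_upwards with s
    rw [he]
    simp only
    rw [← Real.exp_add]
    congr 1; ring
  have hem : Measurable e := by rw [he]; fun_prop
  have hHi : Integrable H := by
    have := (cov1_integrable _).1 hh
    refine this.congr ?_
    filter_upwards with s
    rw [smul_eq_mul, ← Real.exp_mul]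
    have : Real.exp s * Real.exp (s * (α - 1)) = Real.exp (α * s) := by
      rw [← Real.exp_add]; congr 1; ring
    rw [hH]
    simp only
    rw [← this]; ring
  have hWk : ∀ (k : ℝ → ℝ) u, Real.exp (∑ i, c i * u i - α * Q u) *
      (k (Real.exp (Q u)) * Real.exp (α * Q u)) =
      Real.exp (∑ i, c i * u i) * k (q (expm u)) := by
    intro k u
    rw [hQexp, Real.exp_sub]
    field_simp
  have hWe' : ∀ u, Real.exp (∑ i, c i * u i - α * Q u) * e (Q u) =
      Real.exp (∑ i, c i * u i) * Real.exp (-q (expm u)) := hWk (fun s => Real.exp (-s))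
  have hWH : ∀ u, Real.exp (∑ i, c i * u i - α * Q u) * H (Q u) =
      Real.exp (∑ i, c i * u i) * h (q (expm u)) := hWk h
  have hEi := exp_q_int hn hq hc
  obtain ⟨hGi, hfac⟩ := factor hQc.measurable hQ c α hα hHi hei hem (fun s => by
    rw [he]; positivity) (by simp_rw [hWe']; exact hEi)
  simp_rw [hWH] at hGi
  simp_rw [hWH, hWe'] at hfac
  set G : (Fin n → ℝ) → ℝ := fun u => Real.exp (∑ i, c i * u i) * h (q (expm u)) with hG
  -- the Fourier transform of `G`
  have hJ : ∀ τ : ℝ, ∫ s, (e s : ℂ) * cexp (I * ((τ * s : ℝ) : ℂ)) ≠ 0 := by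
    intro τ
    have h1 := mellin_log (fun t => Real.exp (-t)) α τ
    rw [← h1, ← Complex.GammaIntegral_eq_mellin,
      ← Complex.Gamma_eq_integral (by simpa using hα0)]
    exact Complex.Gamma_ne_zero_of_re_pos (by simpa using hα0)
  set A : Set (Fin n → ℝ) := {ξ : Fin n → ℝ |
          mellinT n (fun x => Real.exp (-q x)) (fun i => (c i : ℂ) + I * (ξ i : ℂ)) = 0} with hA
  set T : Set ℝ := {τ : ℝ | mellin (fun t => (h t : ℂ)) ((α : ℂ) + I * (τ : ℂ)) = 0} with hT
  have hAc : IsClosed A := by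
    have : Continuous (fun ξ : Fin n → ℝ =>
        mellinT n (fun x => Real.exp (-q x)) (fun i => (c i : ℂ) + I * (ξ i : ℂ))) := by
      simp_rw [mellinT_log]
      exact FT_cont hEi.ofReal
    exact isClosed_singleton.preimage this
  have hTc : IsClosed T := by
    have : Continuous (fun τ : ℝ =>
        mellin (fun t => (h t : ℂ)) ((α : ℂ) + I * (τ : ℂ))) := by
      simp_rw [mellin_log]
      exact FT1_cont hHi
    exact isClosed_singleton.preimage this
  let L : (Fin n → ℝ) →L[ℝ] ℝ := ∑ i, ContinuousLinearMap.proj (R := ℝ) (φ := fun _ : Fin n => ℝ) i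
  have hL : ∀ ξ, L ξ = ∑ i, ξ i := by
    intro ξ
    simp [L]
  have hLs : Function.Surjective L := by
    intro τ
    refine ⟨Pi.single ⟨0, by omega⟩ τ, ?_⟩
    rw [hL, Finset.sum_pi_single']
    simp
  have hLo : IsOpenMap L := L.isOpenMap hLs
  have hZ : {ξ | FT (fun u => (G u : ℂ)) ξ = 0} = A ∪ L ⁻¹' T := by
    ext ξ
    have h1 := hfac ξ
    have h2 : mellinT n (fun x => Real.exp (-q x)) (fun i => (c i : ℂ) + I * (ξ i : ℂ)) =
      FT (fun u => ((Real.exp (∑ i, c i * u i) * Real.exp (-q (expm u)) : ℝ) : ℂ)) ξ :=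
      mellinT_log _ c ξ
    have h3 : mellin (fun t => (h t : ℂ)) ((α : ℂ) + I * ((∑ i, ξ i : ℝ) : ℂ)) =
      ∫ s, (H s : ℂ) * cexp (I * (((∑ i, ξ i) * s : ℝ) : ℂ)) := mellin_log h α _
    rw [← h2, ← h3] at h1
    have h4 := hJ (∑ i, ξ i)
    have m1 : ξ ∈ L ⁻¹' T ↔
        mellin (fun t => (h t : ℂ)) ((α : ℂ) + I * ((∑ i, ξ i : ℝ) : ℂ)) = 0 := by
      rw [← hL]; rfl
    have m2 : ξ ∈ A ↔ mellinT n (fun x => Real.exp (-q x))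
        (fun i => (c i : ℂ) + I * (ξ i : ℂ)) = 0 := Iff.rfl
    have m3 : ξ ∈ {ξ | FT (fun u => (G u : ℂ)) ξ = 0} ↔ FT (fun u => (G u : ℂ)) ξ = 0 := Iff.rfl
    rw [Set.mem_union, m1, m2, m3, ← mul_eq_zero, ← h1, mul_eq_zero, or_iff_left h4]
  have hLT : interior (L ⁻¹' T) = L ⁻¹' interior T :=
    (hLo.preimage_interior_eq_interior_preimage L.continuous T).symm
  have hRHS : (IsNowhereDense A ∧ IsNowhereDense T) ↔
      interior {ξ | FT (fun u => (G u : ℂ)) ξ = 0} = ∅ := by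
    rw [hZ, hAc.isNowhereDense_iff, hTc.isNowhereDense_iff]
    constructor
    · rintro ⟨h1, h2⟩
      rw [interior_union_isClosed_of_interior_empty hAc (by rw [hLT, h2, preimage_empty]), h1]
    · intro h1
      refine ⟨?_, ?_⟩
      · exact subset_empty_iff.1 (h1 ▸ interior_mono subset_union_left)
      · have h2 : interior (L ⁻¹' T) = ∅ :=
          subset_empty_iff.1 (h1 ▸ interior_mono subset_union_right)
        rw [hLT] at h2
        rw [Set.eq_empty_iff_forall_notMem]
        intro τ hτ
        obtain ⟨ξ, rfl⟩ := hLs τ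
        exact (Set.eq_empty_iff_forall_notMem.1 h2 ξ) hτ
  rw [hRHS]
  -- translation between `f` and `F`
  have hmem : ∀ f : (Fin n → ℝ) → ℝ, MemL1w n (fun i => 1 - c i) f ↔
      Integrable (fun u => Real.exp (∑ i, (1 - c i) * u i) * f (expm u)) := by
    intro f
    rw [MemL1w, cov_integrable]
    refine integrable_congr ?_
    filter_upwards with u
    have hx : ∀ i, expm u i = Real.exp (u i) := fun i => rfl
    simp_rw [hx, ← Real.exp_mul]
    rw [← Real.exp_sum, smul_eq_mul]
    have : Real.exp (∑ i, u i) * Real.exp (∑ i, u i * (1 - c i - 1)) =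
        Real.exp (∑ i, (1 - c i) * u i) := by
      rw [← Real.exp_add, ← Finset.sum_add_distrib]
      congr 1
      refine Finset.sum_congr rfl fun i _ => ?_
      ring
    rw [← this]; ring
  have hR : ∀ (f : (Fin n → ℝ) → ℝ) (w : Fin n → ℝ), Rhq n q h f (expm w) =
      Real.exp (-∑ i, c i * w i) *
        ∫ u, G (w + u) * (Real.exp (∑ i, (1 - c i) * u i) * f (expm u)) := by
    intro f w
    rw [Rhq, cov_int, ← integral_const_mul]
    congr 1
    ext u
    have h1 : (fun i => expm w i * expm u i) = expm (w + u) := by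
      ext i; simp only [expm, Pi.add_apply, Real.exp_add]
    rw [h1, smul_eq_mul, hG]
    simp only
    have : Real.exp (∑ i, u i) = Real.exp (-∑ i, c i * w i) *
        (Real.exp (∑ i, c i * (w + u) i) * Real.exp (∑ i, (1 - c i) * u i)) := by
      rw [← Real.exp_add, ← Real.exp_add, ← Finset.sum_neg_distrib, ← Finset.sum_add_distrib,
        ← Finset.sum_add_distrib]
      congr 1
      refine Finset.sum_congr rfl fun i _ => ?_
      simp only [Pi.add_apply]
      ring
    rw [this]; ring
  constructor
  · intro hinj
    refine fwd_aux hGi fun F hF hF0 => ?_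
    let f : (Fin n → ℝ) → ℝ := fun x =>
      Real.exp (-∑ i, (1 - c i) * Real.log (x i)) * F (fun i => Real.log (x i))
    have hfF : ∀ u, Real.exp (∑ i, (1 - c i) * u i) * f (expm u) = F u := by
      intro u
      simp only [f, expm, Real.log_exp]
      rw [← mul_assoc, ← Real.exp_add]
      simp
    have h1 := hinj f ((hmem f).2 (by simp_rw [hfF]; exact hF)) (fun p hp => by
      rw [← expm_log hp, hR]
      simp_rw [hfF]
      rw [hF0, mul_zero])
    rw [ae_orth] at h1
    filter_upwards [h1] with u hu
    rw [← hfF u, hu, mul_zero]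
    rfl
  · intro hd f hf hf0
    rw [ae_orth]
    have h1 := bwd_aux hGi ((hmem f).1 hf) hd (fun w => by
      have h2 := hf0 (expm w) (expm_mem w)
      rw [hR] at h2
      exact (mul_eq_zero.1 h2).resolve_left (Real.exp_pos _).ne')
    filter_upwards [h1] with u hu
    exact (mul_eq_zero.1 hu).resolve_left (Real.exp_pos _).ne'
end
end
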